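/- Propagation of lower bounds without smallness of the drift: Let α > 0 and r > 0, and set Q := B_r(0) × (−r², (α−1)r²). Suppose u ∈ C^{2,1} on an open set containing the closure of Q satisfies −u_t + Lu ≤ 0 and u > 0 at every point of Q, and u ≥ ℓ on B_r(0) × {−r²} for some ℓ > 0. Then u ≥ C·ℓ on B_{r/2}(0) × {(α−1)r²}, and in particular u(0, (α−1)r²) ≥ C·ℓ, where C is a positive constant depending only on n, ν, S and α. -/

import Mathlib

open MeasureTheory ENNReal Metric Set RealInnerProductSpace

noncomputable section

/-- `n`-dimensional Euclidean space. -/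
abbrev En (n : ℕ) : Type := EuclideanSpace ℝ (Fin n)

variable {n : ℕ}

/-- Time derivative `u_t`. -/
def Dt (u : En n × ℝ → ℝ) (X : En n × ℝ) : ℝ :=
  deriv (fun t => u (X.1, t)) X.2

/-- First spatial derivative `D_i u`. -/
def Dx (u : En n × ℝ → ℝ) (i : Fin n) (X : En n × ℝ) : ℝ :=
  fderiv ℝ (fun x => u (x, X.2)) X.1 (EuclideanSpace.single i 1)

/-- Second spatial derivative `D_{ij} u`. -/
def Dxx (u : En n × ℝ → ℝ) (i j : Fin n) (X : En n × ℝ) : ℝ :=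
  Dx (Dx u j) i X

/-- `u` is of class `C^{2,1}` on `Q`: `u`, `D_i u`, `D_{ij} u`, `u_t` exist and are
continuous on `Q`. -/
structure IsC21 (u : En n × ℝ → ℝ) (Q : Set (En n × ℝ)) : Prop where
  cont : ContinuousOn u Q
  diff_t : ∀ X ∈ Q, DifferentiableAt ℝ (fun t => u (X.1, t)) X.2
  diff_x : ∀ X ∈ Q, DifferentiableAt ℝ (fun x => u (x, X.2)) X.1
  diff_xx : ∀ j : Fin n, ∀ X ∈ Q, DifferentiableAt ℝ (fun x => Dx u j (x, X.2)) X.1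
  cont_t : ContinuousOn (Dt u) Q
  cont_x : ∀ i, ContinuousOn (Dx u i) Q
  cont_xx : ∀ i j, ContinuousOn (Dxx u i j) Q

/-- Uniform parabolicity with constant `ν` on `Q`:
`ν⁻¹|ξ|² ≤ Σ a_ij ξ_i ξ_j` and `Σ a_ij² ≤ ν²`. -/
def UnifParabolic (ν : ℝ) (a : En n × ℝ → Matrix (Fin n) (Fin n) ℝ)
    (Q : Set (En n × ℝ)) : Prop :=
  ∀ X ∈ Q, (∀ ξ : Fin n → ℝ, ν⁻¹ * (∑ i, ξ i ^ 2) ≤ ∑ i, ∑ j, a X i j * ξ i * ξ j) ∧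
    (∑ i, ∑ j, (a X i j) ^ 2) ≤ ν ^ 2

/-- `Lu = Σ_{ij} a_ij D_ij u + Σ_i b_i D_i u`. -/
def Lop (a : En n × ℝ → Matrix (Fin n) (Fin n) ℝ) (b : En n × ℝ → En n)
    (u : En n × ℝ → ℝ) (X : En n × ℝ) : ℝ :=
  (∑ i, ∑ j, a X i j * Dxx u i j X) + ∑ i, b X i * Dx u i X

/-- `∫ (ess sup_t |f(x,t)|)ⁿ dx`, the `n`-th power of the `L^n_x L^∞_t` norm of `f`
over the set `Q ⊆ ℝⁿ × ℝ`. -/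
def LxnLtinfPow {E : Type*} [NNNorm E] (f : En n × ℝ → E) (Q : Set (En n × ℝ)) : ℝ≥0∞ :=
  ∫⁻ x, (essSup (fun t => (‖f (x, t)‖₊ : ℝ≥0∞)) (volume.restrict {t | (x, t) ∈ Q})) ^ n

/-- The `L^n_x L^∞_t` norm of `f` over `Q`. -/
def LxnLtinf {E : Type*} [NNNorm E] (f : En n × ℝ → E) (Q : Set (En n × ℝ)) : ℝ≥0∞ :=
  (LxnLtinfPow f Q) ^ (1 / (n : ℝ))

/-- The box `B_ρ(y) × (t₁, t₂)`. -/
def box (y : En n) (ρ t₁ t₂ : ℝ) : Set (En n × ℝ) := ball y ρ ×ˢ Ioo t₁ t₂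

/-- The standard parabolic cylinder `Q_r(Y) = B_r(y) × (s - r², s)`. -/
def pcyl (Y : En n × ℝ) (r : ℝ) : Set (En n × ℝ) := box Y.1 r (Y.2 - r ^ 2) Y.2

/-- The slanted cylinder `V_r(Y) = {(x,t) : |x - (t/s)y| < r, 0 < t < s}`. -/
def slantCyl (Y : En n × ℝ) (r : ℝ) : Set (En n × ℝ) :=
  {X | ‖X.1 - (X.2 / Y.2) • Y.1‖ < r ∧ 0 < X.2 ∧ X.2 < Y.2}

/-- Supremum of the positive part `u₊` over a set `A`. -/
def supPos (u : En n × ℝ → ℝ) (A : Set (En n × ℝ)) : ℝ :=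
  sSup ((fun X => max (u X) 0) '' A)

/-- `Ω` is a Lipschitz domain with character `(rΩ, mΩ)`: at every boundary point `y`
there is a coordinate frame, encoded by the unit "vertical" direction `e`, in which
`Ω ∩ B_{rΩ}(y)` is the region above the graph of an `mΩ`-Lipschitz function `φ`
of the tangential variables. -/
def IsLipschitzDomain (Ω : Set (En n)) (rΩ mΩ : ℝ) : Prop :=
  0 < rΩ ∧ 0 ≤ mΩ ∧
  ∀ y ∈ frontier Ω, ∃ (e : En n) (φ : En n → ℝ),
    ‖e‖ = 1 ∧ LipschitzWith (Real.toNNReal mΩ) φ ∧ φ 0 = 0 ∧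
    (∀ x, x ∈ Ω ∩ ball y rΩ ↔
      dist x y < rΩ ∧ φ ((x - y) - ⟪x - y, e⟫ • e) < ⟪x - y, e⟫) ∧
    (∀ ρ : ℝ, 0 < ρ → ρ ≤ rΩ → y + ρ • e ∈ Ω)

/-!
A supersolution `u` that starts above `ℓ` can become small near `z` only where the drift is large.
Multiply `u` by an exponential in time and touch it from below, for every vertex `y` near `z`, by a
multiple of the bump `(ρ² - |x - y|²)²`; if `u` is too small at `z` for some later time, a touching
point exists and lies after the initial time. There the bump is a strict subsolution up to the drift
term, so the equation forces `|b| ≥ (νρ)⁻¹`, and it bounds `D²u` minus the Hessian of the bump by a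
multiple of `νρ|b|`. Comparing two touching bumps along the segment through their vertices turns
that bound into a local Lipschitz bound for the map from the spatial touching point to the vertex,
with constant proportional to `νρ|b|`. The vertices fill a ball of radius `ρ / 2`, so
`∫ (sup_t |b|)ⁿ` over the ball of radius `2ρ` about `z` cannot be small. The map goes between
subsets of `ℝⁿ`, whatever the touching times are, which is why the norm `L^n_x L^∞_t` of the drift
is the right one.

For a large drift, cut `B_r \ B_{θr}` into so many annuli that the drift is small in one of them.
The lower bound then holds on the middle sphere of this annulus at all times, and the minimum
principle carries it inside.
-/

open scoped NNReal Topology Matrix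

section LocallyLipschitz

variable {X Y : Type*} [EMetricSpace X] [SecondCountableTopology X] [MeasurableSpace X]
  [BorelSpace X] [EMetricSpace Y] [MeasurableSpace Y] [BorelSpace Y] {f : X → Y} {s : Set X}
  {d : ℝ}

theorem hausdorffMeasure_image_le_of_edist_le {K : ℝ≥0} {δ : ℝ≥0∞} (hd : 0 ≤ d) (hδ : 0 < δ)
    (h : ∀ x ∈ s, ∀ x' ∈ s, edist x x' < δ → edist (f x) (f x') ≤ K * edist x x') :
    μH[d] (f '' s) ≤ (K : ℝ≥0∞) ^ d * μH[d] s := by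
  obtain ⟨t, ht, hcover⟩ := TopologicalSpace.countable_cover_nhds
    fun x : X => eball_mem_nhds x (ENNReal.half_pos hδ.ne')
  rcases t.eq_empty_or_nonempty with rfl | hne
  · simp only [mem_empty_iff_false, iUnion_of_empty, iUnion_empty] at hcover
    simp [eq_empty_of_subset_empty ((subset_univ s).trans_eq hcover.symm)]
  obtain ⟨c, rfl⟩ := ht.exists_eq_range hne
  set E : ℕ → Set X := disjointed fun i => eball (c i) (δ / 2)
  have hE : ∀ i, MeasurableSet (E i) := .disjointed fun i => isOpen_eball.measurableSet
  have hE_univ : ⋃ i, E i = univ := by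
    rw [iUnion_disjointed, ← hcover, biUnion_range]
  have hlip : ∀ i, LipschitzOnWith K f (E i ∩ s) := fun i x hx x' hx' => by
    have hxc := disjointed_subset _ i hx.1
    have hxc' := disjointed_subset _ i hx'.1
    refine h x hx.2 x' hx'.2 ((edist_triangle_right _ _ (c i)).trans_lt ?_)
    exact (ENNReal.add_lt_add hxc hxc').trans_eq (ENNReal.add_halves δ)
  calc μH[d] (f '' s) = μH[d] (⋃ i, f '' (E i ∩ s)) := by
        rw [← image_iUnion, ← iUnion_inter, hE_univ, univ_inter]
    _ ≤ ∑' i, μH[d] (f '' (E i ∩ s)) := measure_iUnion_le _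
    _ ≤ ∑' i, (K : ℝ≥0∞) ^ d * μH[d] (E i ∩ s) :=
        ENNReal.tsum_le_tsum fun i => (hlip i).hausdorffMeasure_image_le hd
    _ = (K : ℝ≥0∞) ^ d * ∑' i, (μH[d].restrict s) (E i) := by
        simp only [ENNReal.tsum_mul_left, Measure.restrict_apply, hE]
    _ = (K : ℝ≥0∞) ^ d * μH[d] s := by
        rw [← measure_iUnion (disjoint_disjointed _) hE, hE_univ, Measure.restrict_apply_univ]

theorem hausdorffMeasure_image_le_of_eventually_edist_le {K : ℝ≥0} (hd : 0 ≤ d)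
    (h : ∀ x ∈ s, ∀ᶠ x' in 𝓝[s] x, edist (f x) (f x') ≤ K * edist x x') :
    μH[d] (f '' s) ≤ (K : ℝ≥0∞) ^ d * μH[d] s := by
  set piece : ℕ → Set X := fun k => {x ∈ s | ∀ x' ∈ s, edist x x' < (k + 1 : ℝ≥0∞)⁻¹ →
    edist (f x) (f x') ≤ K * edist x x'}
  have hmono : Monotone piece := fun j k hjk x hx =>
    ⟨hx.1, fun x' hx' hlt => hx.2 x' hx' (hlt.trans_le (by gcongr))⟩
  have hs : s = ⋃ k, piece k := by
    refine Subset.antisymm (fun x hx => ?_) (iUnion_subset fun k x hx => hx.1)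
    obtain ⟨ε, hε, hball⟩ := EMetric.mem_nhdsWithin_iff.1 (h x hx)
    obtain ⟨k, hk⟩ := ENNReal.exists_inv_nat_lt hε.ne'
    refine mem_iUnion.2 ⟨k, hx, fun x' hx' hlt => hball ⟨?_, hx'⟩⟩
    rw [mem_eball, edist_comm]
    exact (hlt.trans_le (ENNReal.inv_le_inv.2 le_self_add)).trans hk
  calc μH[d] (f '' s) = ⨆ k, μH[d] (f '' piece k) := by
        rw [hs, image_iUnion, Monotone.measure_iUnion fun j k hjk => image_mono (hmono hjk)]
    _ ≤ (K : ℝ≥0∞) ^ d * μH[d] s := iSup_le fun k =>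
        (hausdorffMeasure_image_le_of_edist_le hd (by simp)
          fun x hx x' hx' => hx.2 x' hx'.1).trans (by gcongr; exact fun x hx => hx.1)

theorem hausdorffMeasure_image_le_of_exists_edist_le {c : ℝ≥0∞} (hd : 0 ≤ d)
    (h : ∀ x ∈ s, ∃ K : ℝ≥0, K ≤ c ∧ ∀ᶠ x' in 𝓝[s] x, edist (f x) (f x') ≤ K * edist x x') :
    μH[d] (f '' s) ≤ c ^ d * μH[d] s := by
  induction c with
  | coe c =>
    refine hausdorffMeasure_image_le_of_eventually_edist_le hd fun x hx => ?_
    obtain ⟨K, hKc, hK⟩ := h x hx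
    filter_upwards [hK] with x' hx' using hx'.trans (by gcongr)
  | top =>
    set piece : ℕ → Set X := fun m =>
      {x ∈ s | ∀ᶠ x' in 𝓝[s] x, edist (f x) (f x') ≤ (m : ℝ≥0) * edist x x'}
    have hmono : Monotone piece := fun j m hjm x hx =>
      ⟨hx.1, hx.2.mono fun x' hx' => hx'.trans (by gcongr)⟩
    have hs : s = ⋃ m, piece m := by
      refine Subset.antisymm (fun x hx => ?_) (iUnion_subset fun m x hx => hx.1)
      obtain ⟨K, -, hK⟩ := h x hx
      obtain ⟨m, hm⟩ := exists_nat_ge K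
      exact mem_iUnion.2 ⟨m, hx, hK.mono fun x' hx' => hx'.trans (by gcongr)⟩
    have hpiece : ∀ m, piece m ⊆ s := fun m x hx => hx.1
    calc μH[d] (f '' s) = ⨆ m, μH[d] (f '' piece m) := by
          rw [hs, image_iUnion, Monotone.measure_iUnion fun j m hjm => image_mono (hmono hjm)]
      _ ≤ ∞ ^ d * μH[d] s := iSup_le fun m =>
          (hausdorffMeasure_image_le_of_eventually_edist_le hd fun x hx =>
            hx.2.filter_mono (nhdsWithin_mono x (hpiece m))).trans
          (mul_le_mul' (ENNReal.rpow_le_rpow le_top hd) (measure_mono (hpiece m)))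

theorem hausdorffMeasure_image_inter_preimage_le {L : X → ℝ≥0∞} (hL : Measurable L) (hd : 0 ≤ d)
    (h : ∀ x ∈ s, ∃ K : ℝ≥0, K ≤ L x ∧ ∀ᶠ x' in 𝓝[s] x, edist (f x) (f x') ≤ K * edist x x')
    {I : Set ℝ≥0∞} {c : ℝ≥0∞} (hI : MeasurableSet I) (hc : ∀ q ∈ I, q ≤ c ∧ c ≤ 2 * q) :
    μH[d] (f '' (s ∩ L ⁻¹' I)) ≤ ∫⁻ x in s ∩ L ⁻¹' I, (2 * L x) ^ d ∂μH[d] :=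
  calc μH[d] (f '' (s ∩ L ⁻¹' I)) ≤ c ^ d * μH[d] (s ∩ L ⁻¹' I) := by
        refine hausdorffMeasure_image_le_of_exists_edist_le hd fun x hx => ?_
        obtain ⟨K, hKL, hK⟩ := h x hx.1
        exact ⟨K, hKL.trans (hc _ hx.2).1, hK.filter_mono (nhdsWithin_mono x inter_subset_left)⟩
    _ = ∫⁻ _ in s ∩ L ⁻¹' I, c ^ d ∂μH[d] := (setLIntegral_const _ _).symm
    _ ≤ ∫⁻ x in s ∩ L ⁻¹' I, (2 * L x) ^ d ∂μH[d] := by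
        rw [inter_comm, ← Measure.restrict_restrict (hL hI)]
        exact setLIntegral_mono' (hL hI) fun x hx => ENNReal.rpow_le_rpow (hc _ hx).2 hd

/- The dyadic layers of `L` lose a factor two. The constants `K` are finite because `∞` is not a
Lipschitz constant in `ℝ≥0∞`: `∞ * 0 = 0`. -/
theorem hausdorffMeasure_image_le_lintegral {L : X → ℝ≥0∞} (hL : Measurable L) (hd : 0 ≤ d)
    (h : ∀ x ∈ s, ∃ K : ℝ≥0, K ≤ L x ∧ ∀ᶠ x' in 𝓝[s] x, edist (f x) (f x') ≤ K * edist x x') :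
    μH[d] (f '' s) ≤ ∫⁻ x in s, (2 * L x) ^ d ∂μH[d] := by
  set ν : Measure X := (μH[d].restrict s).withDensity fun x => (2 * L x) ^ d
  have hlayer : ∀ (I : Set ℝ≥0∞) (c : ℝ≥0∞), MeasurableSet I → (∀ q ∈ I, q ≤ c ∧ c ≤ 2 * q) →
      μH[d] (f '' (s ∩ L ⁻¹' I)) ≤ ν (univ ∩ L ⁻¹' I) := fun I c hI hc => by
    rw [univ_inter, withDensity_apply _ (hL hI), Measure.restrict_restrict (hL hI),
      inter_comm _ s]
    exact hausdorffMeasure_image_inter_preimage_le hL hd h hI hc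
  have hcover : s ⊆ (s ∩ L ⁻¹' {0}) ∪ (s ∩ L ⁻¹' {∞}) ∪
      ⋃ j : ℤ, s ∩ L ⁻¹' Ico (2 ^ j) (2 ^ (j + 1)) := fun x hx => by
    by_cases h0 : L x = 0
    · exact .inl (.inl ⟨hx, h0⟩)
    by_cases htop : L x = ∞
    · exact .inl (.inr ⟨hx, htop⟩)
    obtain ⟨j, hj⟩ := ENNReal.exists_mem_Ico_zpow h0 htop one_lt_two ENNReal.ofNat_ne_top
    exact .inr (mem_iUnion.2 ⟨j, hx, hj⟩)
  calc μH[d] (f '' s) ≤ μH[d] (f '' (s ∩ L ⁻¹' {0})) + μH[d] (f '' (s ∩ L ⁻¹' {∞})) +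
        ∑' j : ℤ, μH[d] (f '' (s ∩ L ⁻¹' Ico (2 ^ j) (2 ^ (j + 1)))) := by
        refine (measure_mono (image_mono hcover)).trans ?_
        rw [image_union, image_union, image_iUnion]
        refine (measure_union_le _ _).trans ?_
        exact add_le_add (measure_union_le _ _) (measure_iUnion_le _)
    _ ≤ ν (univ ∩ L ⁻¹' {0}) + ν (univ ∩ L ⁻¹' {∞}) +
        ∑' j : ℤ, ν (univ ∩ L ⁻¹' Ico (2 ^ j) (2 ^ (j + 1))) := by
        gcongr with j
        · exact hlayer _ 0 (measurableSet_singleton _) (by simp)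
        · exact hlayer _ ∞ (measurableSet_singleton _) (by simp)
        · refine hlayer _ (2 ^ (j + 1)) measurableSet_Ico fun q hq => ⟨hq.2.le, ?_⟩
          rw [ENNReal.zpow_add two_ne_zero ENNReal.ofNat_ne_top, zpow_one, mul_comm]
          exact mul_le_mul_right hq.1 2
    _ = ν univ := by
        exact_mod_cast (measure_eq_measure_preimage_add_measure_tsum_Ico_zpow ν hL .univ
          one_lt_two).symm
    _ = ∫⁻ x in s, (2 * L x) ^ d ∂μH[d] := by
        rw [withDensity_apply _ .univ, Measure.restrict_univ]

end LocallyLipschitz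

theorem addHaar_image_le_lintegral {E : Type*} [NormedAddCommGroup E] [NormedSpace ℝ E]
    [FiniteDimensional ℝ E] [MeasurableSpace E] [BorelSpace E] (μ : Measure E)
    [μ.IsAddHaarMeasure] {f : E → E} {s : Set E} {L : E → ℝ≥0∞} (hL : Measurable L)
    (h : ∀ x ∈ s, ∃ K : ℝ≥0, K ≤ L x ∧ ∀ᶠ x' in 𝓝[s] x, edist (f x) (f x') ≤ K * edist x x') :
    μ (f '' s) ≤ ∫⁻ x in s, (2 * L x) ^ Module.finrank ℝ E ∂μ := by
  have hHausdorff : μH[Module.finrank ℝ E] (f '' s) ≤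
      ∫⁻ x in s, (2 * L x) ^ Module.finrank ℝ E ∂μH[Module.finrank ℝ E] := by
    simpa only [ENNReal.rpow_natCast] using
      hausdorffMeasure_image_le_lintegral hL (Nat.cast_nonneg _) h
  rw [Measure.isAddLeftInvariant_eq_smul μ μH[Module.finrank ℝ E], Measure.restrict_smul,
    lintegral_smul_measure, Measure.smul_apply]
  gcongr

theorem addHaar_le_lintegral_of_dist_le {E : Type*} [NormedAddCommGroup E] [NormedSpace ℝ E]
    [FiniteDimensional ℝ E] [MeasurableSpace E] [BorelSpace E] (μ : Measure E)
    [μ.IsAddHaarMeasure] {X : E → E} {T D : Set E} {L : E → ℝ≥0∞} (hL : Measurable L)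
    (hXD : MapsTo X T D)
    (h : ∀ y ∈ T, ∃ K : ℝ≥0, K ≤ L (X y) ∧
      ∀ᶠ x in 𝓝 (X y), ∀ y' ∈ T, X y' = x → dist y y' ≤ K * dist (X y) x) :
    μ T ≤ ∫⁻ x in D, (2 * L x) ^ Module.finrank ℝ E ∂μ := by
  have hinj : InjOn X T := fun y hy y' hy' heq => by
    obtain ⟨K, -, hK⟩ := h y hy
    simpa using hK.self_of_nhds y' hy' heq.symm
  calc μ T = μ (Function.invFunOn X T '' (X '' T)) := by rw [hinj.invFunOn_image Subset.rfl]
    _ ≤ ∫⁻ x in X '' T, (2 * L x) ^ Module.finrank ℝ E ∂μ := by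
        refine addHaar_image_le_lintegral μ hL ?_
        rintro _ ⟨y, hy, rfl⟩
        obtain ⟨K, hKL, hK⟩ := h y hy
        refine ⟨K, hKL, ?_⟩
        filter_upwards [nhdsWithin_le_nhds hK, self_mem_nhdsWithin]
        rintro _ hx ⟨y', hy', rfl⟩
        rw [hinj.leftInvOn_invFunOn hy, hinj.leftInvOn_invFunOn hy', edist_nndist, edist_nndist]
        exact_mod_cast hx y' hy' rfl
    _ ≤ ∫⁻ x in D, (2 * L x) ^ Module.finrank ℝ E ∂μ := lintegral_mono_set hXD.image_subset

section Hessian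

variable {F : Type*} [NormedAddCommGroup F] [InnerProductSpace ℝ F] [CompleteSpace F]
  {f f₁ f₂ : F → ℝ} {g g₁ g₂ : F → F} {N N₁ N₂ : F →L[ℝ] F} {x : F}

/-- `f` has gradient `g` near `x`, and `g` is differentiable at `x` with derivative `N`; so `N` is
the Hessian of `f` at `x`. The gradient field is a parameter because second derivatives are given
here as derivatives of first derivatives. -/
structure HasHessianAt (f : F → ℝ) (g : F → F) (N : F →L[ℝ] F) (x : F) : Prop where
  eventually_hasGradientAt : ∀ᶠ z in 𝓝 x, HasGradientAt f (g z) z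
  hasFDerivAt : HasFDerivAt g N x

namespace HasHessianAt

theorem const_mul (h : HasHessianAt f g N x) (c : ℝ) :
    HasHessianAt (fun z => c * f z) (fun z => c • g z) (c • N) x where
  eventually_hasGradientAt := by
    filter_upwards [h.eventually_hasGradientAt] with z hz
    rw [hasGradientAt_iff_hasFDerivAt] at hz ⊢
    simpa using hz.const_mul c
  hasFDerivAt := h.hasFDerivAt.const_smul c

theorem sub (h₁ : HasHessianAt f₁ g₁ N₁ x) (h₂ : HasHessianAt f₂ g₂ N₂ x) :
    HasHessianAt (fun z => f₁ z - f₂ z) (fun z => g₁ z - g₂ z) (N₁ - N₂) x where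
  eventually_hasGradientAt := by
    filter_upwards [h₁.eventually_hasGradientAt, h₂.eventually_hasGradientAt] with z hz₁ hz₂
    rw [hasGradientAt_iff_hasFDerivAt] at hz₁ hz₂ ⊢
    simpa using hz₁.fun_sub hz₂
  hasFDerivAt := h₁.hasFDerivAt.sub h₂.hasFDerivAt

theorem inner_comm (h : HasHessianAt f g N x) (v w : F) : ⟪N v, w⟫ = ⟪N w, v⟫ := by
  have hf : ∀ᶠ z in 𝓝 x, HasFDerivAt f (innerSL ℝ (g z)) z :=
    h.eventually_hasGradientAt.mono fun z hz => hz.hasFDerivAt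
  have hg : HasFDerivAt (fun z => innerSL ℝ (g z)) ((innerSL ℝ).comp N) x :=
    (innerSL ℝ).hasFDerivAt.comp x h.hasFDerivAt
  simpa using second_derivative_symmetric_of_eventually hf hg v w

theorem hasFDerivAt_taylorRemainder (h : HasHessianAt f g N x) {z : F}
    (hz : HasGradientAt f (g z) z) :
    HasFDerivAt (fun w => f w - ⟪g x, w - x⟫ - 2⁻¹ * ⟪N (w - x), w - x⟫)
      (innerSL ℝ (g z - g x - N (z - x))) z := by
  have hid : HasFDerivAt (fun w : F => w - x) (.id ℝ F) z := (hasFDerivAt_id z).sub_const x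
  have hquad := ((N.hasFDerivAt.comp z hid).inner ℝ hid).const_mul 2⁻¹
  refine ((hz.hasFDerivAt.sub ((innerSL ℝ (g x)).hasFDerivAt.comp z hid)).sub hquad).congr_fderiv ?_
  ext v
  simp only [ContinuousLinearMap.comp_id, Function.comp_apply, map_sub, sub_apply,
    InnerProductSpace.toDual_apply_apply, real_inner_comm, coe_innerSL_apply, smul_apply,
    ContinuousLinearMap.comp_apply, ContinuousLinearMap.prod_apply, ContinuousLinearMap.id_apply,
    fderivInnerCLM_apply, inner_sub_right, h.inner_comm v, smul_eq_mul]
  ring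

theorem isLittleO (h : HasHessianAt f g N x) :
    (fun z => f z - f x - ⟪g x, z - x⟫ - 2⁻¹ * ⟪N (z - x), z - x⟫)
      =o[𝓝 x] fun z => ‖z - x‖ ^ 2 := by
  refine Asymptotics.isLittleO_iff.2 fun ε hε => ?_
  have hgrad := h.hasFDerivAt.isLittleO.def hε
  obtain ⟨δ, hδ, hball⟩ := Metric.eventually_nhds_iff_ball.1
    (h.eventually_hasGradientAt.and hgrad)
  filter_upwards [ball_mem_nhds x hδ] with z hz
  have hsub : closedBall x ‖z - x‖ ⊆ ball x δ :=
    closedBall_subset_ball (by rwa [← dist_eq_norm])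
  have hbound := (convex_closedBall x ‖z - x‖).norm_image_sub_le_of_norm_hasFDerivWithin_le
    (C := ε * ‖z - x‖)
    (fun w hw => (h.hasFDerivAt_taylorRemainder (hball w (hsub hw)).1).hasFDerivWithinAt)
    (fun w hw => by
      rw [innerSL_apply_norm]
      refine (hball w (hsub hw)).2.trans ?_
      gcongr
      rwa [← dist_eq_norm])
    (mem_closedBall_self (norm_nonneg _)) (mem_closedBall.2 (dist_eq_norm z x).le)
  convert hbound using 1
  · simp only [sub_self, inner_zero_right, map_zero, mul_zero, sub_zero]
    congr 1
    ring
  · rw [norm_pow, norm_norm]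
    ring

theorem grad_eq_zero_of_isLocalMin (h : HasHessianAt f g N x) (hmin : IsLocalMin f x) :
    g x = 0 := by
  have hzero := hmin.hasFDerivAt_eq_zero h.eventually_hasGradientAt.self_of_nhds.hasFDerivAt
  simpa using hzero

theorem inner_nonneg_of_isLocalMin (h : HasHessianAt f g N x) (hmin : IsLocalMin f x) (v : F) :
    0 ≤ ⟪N v, v⟫ := by
  by_contra! hneg
  have hv : 0 < ‖v‖ := norm_pos_iff.2 fun hv => by simp [hv] at hneg
  have hline : Filter.Tendsto (fun t : ℝ => x + t • v) (𝓝[≠] 0) (𝓝 x) := by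
    refine (Continuous.tendsto' (by fun_prop) 0 x (by simp)).mono_left nhdsWithin_le_nhds
  have hε : 0 < -⟪N v, v⟫ / (4 * ‖v‖ ^ 2) := by have := neg_pos.2 hneg; positivity
  obtain ⟨t, htaylor, hmin_t, ht⟩ := ((hline.eventually (h.isLittleO.def hε)).and
    ((hline.eventually hmin).and self_mem_nhdsWithin)).exists
  have ht2 : 0 < t ^ 2 := sq_pos_of_ne_zero ht
  have hupper := (le_abs_self _).trans htaylor
  simp only [h.grad_eq_zero_of_isLocalMin hmin, add_sub_cancel_left, map_smul, inner_smul_left,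
    inner_smul_right, inner_zero_left, norm_smul, Real.norm_eq_abs, RCLike.conj_to_real, abs_pow,
    abs_mul, abs_norm, mul_pow, sq_abs] at hupper
  have hcancel : -⟪N v, v⟫ / (4 * ‖v‖ ^ 2) * (t ^ 2 * ‖v‖ ^ 2) = -⟪N v, v⟫ / 4 * t ^ 2 := by
    field_simp
  nlinarith [mul_neg_of_pos_of_neg ht2 hneg]

theorem eventually_le_of_inner_le (h : HasHessianAt f g N x) {Λ : ℝ} (hΛ : 0 < Λ)
    (hN : ∀ v, ⟪N v, v⟫ ≤ Λ * ‖v‖ ^ 2) :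
    ∀ᶠ z in 𝓝 x, f z ≤ f x + ⟪g x, z - x⟫ + Λ * ‖z - x‖ ^ 2 := by
  filter_upwards [h.isLittleO.def (half_pos hΛ)] with z hz
  have hupper := (le_abs_self _).trans hz
  rw [norm_pow, norm_norm] at hupper
  linarith [hN (z - x)]

theorem isPositive_of_isLocalMin (h : HasHessianAt f g N x) (hmin : IsLocalMin f x) :
    N.IsPositive :=
  ⟨fun v w => (h.inner_comm v w).trans (real_inner_comm _ _), h.inner_nonneg_of_isLocalMin hmin⟩

end HasHessianAt

end Hessian

theorem deriv_nonpos_of_isMinOn_Ioc {f : ℝ → ℝ} {t₀ t : ℝ} (ht : t₀ < t)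
    (hmin : IsMinOn f (Ioc t₀ t) t) : deriv f t ≤ 0 := by
  by_cases hf : DifferentiableAt ℝ f t
  · have hcone : (t₀ - t) / 2 ∈ posTangentConeAt (Ioc t₀ t) t := by
      refine mem_posTangentConeAt_of_segment_subset fun s hs => ?_
      rw [segment_symm, segment_eq_Icc (by linarith)] at hs
      exact ⟨by linarith [hs.1], hs.2⟩
    have hnonneg := hmin.localize.hasFDerivWithinAt_nonneg
      hf.hasDerivAt.hasFDerivAt.hasFDerivWithinAt hcone
    simp only [ContinuousLinearMap.toSpanSingleton_apply, smul_eq_mul] at hnonneg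
    nlinarith
  · exact (deriv_zero_of_not_differentiableAt hf).le

section Matrices

variable {ν : ℝ} {A N : Matrix (Fin n) (Fin n) ℝ}

/-- The symbols allowed by `UnifParabolic`: matrices `A` with `ν⁻¹|ξ|² ≤ ⟨Aξ, ξ⟩` and Frobenius
norm at most `ν`. -/
def ellipticMatrices (n : ℕ) (ν : ℝ) : Set (Matrix (Fin n) (Fin n) ℝ) :=
  {A | (∀ ξ : Fin n → ℝ, ν⁻¹ * ∑ i, ξ i ^ 2 ≤ ∑ i, ∑ j, A i j * ξ i * ξ j) ∧
    ∑ i, ∑ j, A i j ^ 2 ≤ ν ^ 2}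

/-- The lower Pucci extremal operator of `ellipticMatrices n ν`. -/
def pucciMin (ν : ℝ) (M : Matrix (Fin n) (Fin n) ℝ) : ℝ :=
  sInf ((fun A => (A * M).trace) '' ellipticMatrices n ν)

theorem inv_mul_dotProduct_self_le (hA : A ∈ ellipticMatrices n ν) (ξ : Fin n → ℝ) :
    ν⁻¹ * (ξ ⬝ᵥ ξ) ≤ ξ ⬝ᵥ A *ᵥ ξ := by
  convert hA.1 ξ using 1
  · simp only [dotProduct, sq]
  · simp only [dotProduct, Matrix.mulVec, Finset.mul_sum]
    exact Finset.sum_congr rfl fun i _ => Finset.sum_congr rfl fun j _ => by ring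

theorem abs_apply_le_of_mem_ellipticMatrices (hν : 0 ≤ ν) (hA : A ∈ ellipticMatrices n ν)
    (i j : Fin n) : |A i j| ≤ ν := by
  refine abs_le_of_sq_le_sq ?_ hν
  calc A i j ^ 2 ≤ ∑ l, A i l ^ 2 :=
        Finset.single_le_sum (f := fun l => A i l ^ 2) (fun l _ => sq_nonneg _) (Finset.mem_univ j)
    _ ≤ ∑ k, ∑ l, A k l ^ 2 := Finset.single_le_sum (f := fun k => ∑ l, A k l ^ 2)
        (fun k _ => Finset.sum_nonneg fun l _ => sq_nonneg _) (Finset.mem_univ i)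
    _ ≤ ν ^ 2 := hA.2

theorem trace_le_of_mem_ellipticMatrices (hν : 0 ≤ ν) (hA : A ∈ ellipticMatrices n ν) :
    A.trace ≤ n * ν := by
  simpa [Matrix.trace] using Finset.sum_le_sum fun i (_ : i ∈ Finset.univ) =>
    (le_abs_self (A i i)).trans (abs_apply_le_of_mem_ellipticMatrices hν hA i i)

theorem isCompact_ellipticMatrices (hν : 0 ≤ ν) : IsCompact (ellipticMatrices n ν) := by
  have hbdd : ellipticMatrices n ν ⊆ Set.pi univ fun _ => Set.pi univ fun _ => Icc (-ν) ν :=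
    fun A hA i _ j _ => abs_le.1 (abs_apply_le_of_mem_ellipticMatrices hν hA i j)
  refine (isCompact_univ_pi fun _ => isCompact_univ_pi fun _ => isCompact_Icc).of_isClosed_subset
    ?_ hbdd
  simp only [ellipticMatrices, ofPred_and, ofPred_forall]
  exact (isClosed_iInter fun ξ => isClosed_le (by fun_prop) (by fun_prop)).inter
    (isClosed_le (by fun_prop) (by fun_prop))

theorem continuous_pucciMin (hν : 0 ≤ ν) : Continuous (pucciMin (n := n) ν) :=
  (isCompact_ellipticMatrices hν).continuous_sInf (f := fun M A => (A * M).trace)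
    (by dsimp only [Function.HasUncurry.uncurry, id]; fun_prop)

theorem pucciMin_le (hν : 0 ≤ ν) (hA : A ∈ ellipticMatrices n ν) (M : Matrix (Fin n) (Fin n) ℝ) :
    pucciMin ν M ≤ (A * M).trace :=
  csInf_le ((isCompact_ellipticMatrices hν).image (by fun_prop)).bddBelow (mem_image_of_mem _ hA)

theorem exists_trace_mul_eq_pucciMin (hν : 0 ≤ ν) (hne : (ellipticMatrices n ν).Nonempty)
    (M : Matrix (Fin n) (Fin n) ℝ) : ∃ A ∈ ellipticMatrices n ν, (A * M).trace = pucciMin ν M :=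
  ((isCompact_ellipticMatrices hν).image (by fun_prop)).sInf_mem (hne.image _)

theorem trace_mul_vecMulVec_self (A : Matrix (Fin n) (Fin n) ℝ) (v : Fin n → ℝ) :
    (A * Matrix.vecMulVec v v).trace = v ⬝ᵥ A *ᵥ v := by
  rw [Matrix.mul_vecMulVec, Matrix.trace_vecMulVec, dotProduct_comm]

theorem trace_le_mul_trace_mul (hν : 0 < ν) (hA : A ∈ ellipticMatrices n ν) (hN : N.PosSemidef) :
    N.trace ≤ ν * (A * N).trace := by
  obtain ⟨m, v, rfl⟩ := Matrix.posSemidef_iff_eq_sum_vecMulVec.1 hN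
  simp only [star_trivial, Finset.mul_sum, Matrix.trace_sum, Matrix.trace_vecMulVec,
    trace_mul_vecMulVec_self]
  exact Finset.sum_le_sum fun k _ =>
    (inv_mul_le_iff₀ hν).1 (inv_mul_dotProduct_self_le hA (v k))

theorem dotProduct_mulVec_le_trace_mul (hN : N.PosSemidef) (ξ : Fin n → ℝ) :
    ξ ⬝ᵥ N *ᵥ ξ ≤ N.trace * (ξ ⬝ᵥ ξ) := by
  obtain ⟨m, v, rfl⟩ := Matrix.posSemidef_iff_eq_sum_vecMulVec.1 hN
  simp only [star_trivial, Matrix.trace_sum, Matrix.trace_vecMulVec, Matrix.sum_mulVec,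
    Matrix.vecMulVec_mulVec, dotProduct_sum, Finset.sum_mul]
  refine Finset.sum_le_sum fun k _ => ?_
  rw [dotProduct_smul, op_smul_eq_mul, dotProduct_comm ξ, ← sq]
  simpa only [dotProduct, sq] using Finset.sum_mul_sq_le_sq_mul_sq Finset.univ (v k) ξ

end Matrices

section Paraboloid

variable {F : Type*} [NormedAddCommGroup F] {ρ : ℝ} {y z : F}

/-- The concave paraboloid with vertex `y` that vanishes on the sphere of radius `ρ` about `y`;
its square is the bump that touches supersolutions from below. -/
def paraboloid (ρ : ℝ) (y z : F) : ℝ := ρ ^ 2 - ‖z - y‖ ^ 2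

theorem paraboloid_pos_iff (hρ : 0 < ρ) : 0 < paraboloid ρ y z ↔ ‖z - y‖ < ρ := by
  rw [paraboloid, sub_pos, sq_lt_sq₀ (norm_nonneg _) hρ.le]

theorem paraboloid_nonneg (hz : ‖z - y‖ ≤ ρ) : 0 ≤ paraboloid ρ y z := by
  rw [paraboloid, sub_nonneg]
  gcongr

theorem paraboloid_le (ρ : ℝ) (y z : F) : paraboloid ρ y z ≤ ρ ^ 2 :=
  sub_le_self _ (sq_nonneg _)

theorem continuous_paraboloid : Continuous fun z : F => paraboloid ρ y z := by
  unfold paraboloid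
  fun_prop

theorem hasFDerivAt_paraboloid [InnerProductSpace ℝ F] (ρ : ℝ) (y z : F) :
    HasFDerivAt (paraboloid ρ y) (-(2 • innerSL ℝ (z - y))) z := by
  refine (((hasFDerivAt_id z).sub_const y).norm_sq.const_sub (ρ ^ 2)).congr_fderiv ?_
  ext v
  simp

theorem hasGradientAt_paraboloid_sq [InnerProductSpace ℝ F] [CompleteSpace F] (ρ : ℝ) (y z : F) :
    HasGradientAt (fun z => paraboloid ρ y z ^ 2) (-(4 * paraboloid ρ y z) • (z - y)) z := by
  refine hasGradientAt_iff_hasFDerivAt.2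
    (((hasFDerivAt_paraboloid ρ y z).pow 2).congr_fderiv ?_)
  ext v
  simp only [Nat.add_one_sub_one, pow_one, nsmul_eq_mul, Nat.cast_ofNat, smul_neg, neg_apply,
    smul_apply, coe_innerSL_apply, smul_eq_mul, neg_smul, map_neg, map_smul,
    InnerProductSpace.toDual_apply_apply]
  ring

end Paraboloid

section BumpHessian

theorem dotProduct_ofLp_self (v : En n) : v.ofLp ⬝ᵥ v.ofLp = ‖v‖ ^ 2 := by
  rw [EuclideanSpace.real_norm_sq_eq, dotProduct]
  exact Finset.sum_congr rfl fun i _ => (sq _).symm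

variable {ν ρ : ℝ} {x y : En n} {A : Matrix (Fin n) (Fin n) ℝ}

/-- The Hessian of `paraboloid ρ y ^ 2` at `x`. -/
def bumpHessian (ρ : ℝ) (y x : En n) : Matrix (Fin n) (Fin n) ℝ :=
  (8 : ℝ) • Matrix.vecMulVec (x - y).ofLp (x - y).ofLp - (4 * paraboloid ρ y x) • 1

theorem hasHessianAt_paraboloid_sq (ρ : ℝ) (y x : En n) :
    HasHessianAt (fun z => paraboloid ρ y z ^ 2) (fun z => -(4 * paraboloid ρ y z) • (z - y))
      (Matrix.toEuclideanCLM (𝕜 := ℝ) (bumpHessian ρ y x)) x where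
  eventually_hasGradientAt := .of_forall (hasGradientAt_paraboloid_sq ρ y)
  hasFDerivAt := by
    refine ((((hasFDerivAt_paraboloid ρ y x).const_mul 4).neg).smul
      ((hasFDerivAt_id x).sub_const y)).congr_fderiv ?_
    ext v i
    have hinner : (x.ofLp - y.ofLp) ⬝ᵥ v.ofLp = ⟪x, v⟫ - ⟪y, v⟫ := by
      simp only [EuclideanSpace.inner_eq_star_dotProduct, star_trivial, sub_dotProduct,
        dotProduct_comm v.ofLp]
    simp only [bumpHessian, neg_smul, map_sub, map_smul, map_one, add_apply, neg_apply, smul_apply,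
      sub_apply, ContinuousLinearMap.id_apply, ContinuousLinearMap.smulRight_apply,
      one_apply_eq_self, coe_innerSL_apply, id_eq, nsmul_eq_mul, Nat.cast_ofNat, smul_eq_mul,
      Pi.neg_apply, PiLp.add_apply, PiLp.neg_apply, PiLp.smul_apply, PiLp.sub_apply,
      Matrix.ofLp_toEuclideanCLM, Matrix.vecMulVec_mulVec, WithLp.ofLp_sub, hinner,
      Pi.smul_apply, Pi.sub_apply, MulOpposite.smul_eq_mul_unop, MulOpposite.unop_op]
    ring

/-- The rate, in units of `ρ⁻²`, at which a supersolution must decay in time for the bump of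
radius `ρ` to be a strict subsolution once the drift is ignored. -/
def decayRate (n : ℕ) (ν : ℝ) : ℝ := (n * ν + 1) ^ 2 * ν + 1

theorem decayRate_nonneg (hν : 0 ≤ ν) : 0 ≤ decayRate n ν := by
  unfold decayRate
  positivity

theorem le_trace_mul_bumpHessian (hν : 1 ≤ ν) (hρ : 0 < ρ) (hA : A ∈ ellipticMatrices n ν)
    (hd : 0 ≤ paraboloid ρ y x) :
    4 * ν⁻¹ * ‖x - y‖ ^ 2 + paraboloid ρ y x ^ 2 / ρ ^ 2
      - decayRate n ν / ρ ^ 2 * paraboloid ρ y x ^ 2 ≤ (A * bumpHessian ρ y x).trace := by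
  have hν0 : 0 < ν := by positivity
  have hquad := inv_mul_dotProduct_self_le hA (x - y).ofLp
  have htrace := mul_le_mul_of_nonneg_left (trace_le_of_mem_ellipticMatrices hν0.le hA) hd
  have hexpand : (A * bumpHessian ρ y x).trace =
      8 * ((x - y).ofLp ⬝ᵥ A *ᵥ (x - y).ofLp) - 4 * (paraboloid ρ y x * A.trace) := by
    rw [bumpHessian, Matrix.mul_sub, Matrix.mul_smul, Matrix.mul_smul, Matrix.mul_one,
      Matrix.trace_sub, Matrix.trace_smul, Matrix.trace_smul, trace_mul_vecMulVec_self]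
    simp only [smul_eq_mul, mul_assoc]
  have hsquare : 0 ≤ 4 * ν⁻¹ * ρ ^ 2 - 4 * paraboloid ρ y x * (n * ν + 1)
      + (n * ν + 1) ^ 2 * ν / ρ ^ 2 * paraboloid ρ y x ^ 2 := by
    have hcomplete : 0 ≤ ν⁻¹ * (2 * ρ - (n * ν + 1) * ν * paraboloid ρ y x / ρ) ^ 2 := by positivity
    refine hcomplete.trans_eq ?_
    field_simp
    ring
  have hdecay : decayRate n ν / ρ ^ 2 * paraboloid ρ y x ^ 2 =
      (n * ν + 1) ^ 2 * ν / ρ ^ 2 * paraboloid ρ y x ^ 2 + paraboloid ρ y x ^ 2 / ρ ^ 2 := by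
    rw [decayRate]
    ring
  have hρ2 : ρ ^ 2 = paraboloid ρ y x + ‖x - y‖ ^ 2 := by rw [paraboloid]; ring
  have hinv : ν⁻¹ * paraboloid ρ y x ≤ paraboloid ρ y x :=
    mul_le_of_le_one_left hd (inv_le_one_of_one_le₀ hν)
  rw [dotProduct_ofLp_self] at hquad
  rw [hexpand, hdecay]
  have hinv_split : ν⁻¹ * ρ ^ 2 = ν⁻¹ * paraboloid ρ y x + ν⁻¹ * ‖x - y‖ ^ 2 := by
    rw [← mul_add, ← hρ2]
  linarith

end BumpHessian

section SpatialDerivatives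

variable {u : En n × ℝ → ℝ} {Q : Set (En n × ℝ)} {X : En n × ℝ}

/-- The spatial gradient `Du`. -/
def spatialGrad (u : En n × ℝ → ℝ) (X : En n × ℝ) : En n :=
  WithLp.toLp 2 fun i => Dx u i X

/-- The spatial Hessian `D²u` as the Jacobian matrix of `spatialGrad u`, whence the order of the
indices; no symmetry is presupposed. -/
def spatialHess (u : En n × ℝ → ℝ) (X : En n × ℝ) : Matrix (Fin n) (Fin n) ℝ :=
  Matrix.of fun j i => Dxx u i j X

theorem Lop_eq_trace_add_inner (a : En n × ℝ → Matrix (Fin n) (Fin n) ℝ) (b : En n × ℝ → En n)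
    (u : En n × ℝ → ℝ) (X : En n × ℝ) :
    Lop a b u X = (a X * spatialHess u X).trace + ⟪b X, spatialGrad u X⟫ := by
  simp [Lop, Matrix.trace, Matrix.mul_apply, spatialHess, spatialGrad, PiLp.inner_apply, mul_comm]

theorem fderiv_slice_apply (u : En n × ℝ → ℝ) (X : En n × ℝ) (v : En n) :
    fderiv ℝ (fun x => u (x, X.2)) X.1 v = ⟪spatialGrad u X, v⟫ := by
  conv_lhs => rw [← (EuclideanSpace.basisFun (Fin n) ℝ).sum_repr v]
  simp [map_sum, spatialGrad, PiLp.inner_apply, Dx]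

theorem IsC21.mono {P : Set (En n × ℝ)} (hu : IsC21 u Q) (hPQ : P ⊆ Q) : IsC21 u P where
  cont := hu.cont.mono hPQ
  diff_t X hX := hu.diff_t X (hPQ hX)
  diff_x X hX := hu.diff_x X (hPQ hX)
  diff_xx j X hX := hu.diff_xx j X (hPQ hX)
  cont_t := hu.cont_t.mono hPQ
  cont_x i := (hu.cont_x i).mono hPQ
  cont_xx i j := (hu.cont_xx i j).mono hPQ

theorem IsC21.hasHessianAt (hu : IsC21 u Q) (hQ : IsOpen Q) (hX : X ∈ Q) :
    HasHessianAt (fun x => u (x, X.2)) (fun x => spatialGrad u (x, X.2))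
      (Matrix.toEuclideanCLM (𝕜 := ℝ) (spatialHess u X)) X.1 where
  eventually_hasGradientAt := by
    have hslice : ∀ᶠ z in 𝓝 X.1, (z, X.2) ∈ Q :=
      (Continuous.prodMk_left X.2).continuousAt.eventually (hQ.mem_nhds hX)
    filter_upwards [hslice] with z hz
    refine hasGradientAt_iff_hasFDerivAt.2 ((hu.diff_x _ hz).hasFDerivAt.congr_fderiv ?_)
    ext v
    exact fderiv_slice_apply u (z, X.2) v
  hasFDerivAt := by
    refine hasFDerivWithinAt_univ.1 (hasFDerivWithinAt_euclidean.2 fun j =>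
      ((hu.diff_xx j X hX).hasFDerivAt.congr_fderiv ?_).hasFDerivWithinAt)
    ext v
    rw [fderiv_slice_apply (Dx u j) X v]
    simp [Matrix.ofLp_toEuclideanCLM, Matrix.mulVec, dotProduct, spatialHess, spatialGrad,
      PiLp.inner_apply, Dxx, mul_comm]

theorem IsC21.continuousOn_spatialGrad (hu : IsC21 u Q) : ContinuousOn (spatialGrad u) Q :=
  (PiLp.continuous_toLp 2 _).comp_continuousOn (continuousOn_pi.2 hu.cont_x)

theorem IsC21.continuousOn_spatialHess (hu : IsC21 u Q) : ContinuousOn (spatialHess u) Q :=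
  continuousOn_pi.2 fun j => continuousOn_pi.2 fun i => hu.cont_xx i j

end SpatialDerivatives

section Supersolutions

variable {ν : ℝ} {a : En n × ℝ → Matrix (Fin n) (Fin n) ℝ} {b : En n × ℝ → En n}
  {u : En n × ℝ → ℝ} {Q : Set (En n × ℝ)} {X : En n × ℝ}

/-- A classical supersolution `-u_t + Lu ≤ 0` on `Q` of an operator `L` that is uniformly parabolic
there. -/
structure IsSupersolution (ν : ℝ) (a : En n × ℝ → Matrix (Fin n) (Fin n) ℝ) (b : En n × ℝ → En n)
    (u : En n × ℝ → ℝ) (Q : Set (En n × ℝ)) : Prop where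
  isC21 : IsC21 u Q
  unifParabolic : UnifParabolic ν a Q
  supersolution : ∀ X ∈ Q, -Dt u X + Lop a b u X ≤ 0

/-- The size of drift that the equation forces at `X`, whatever its coefficients are. Unlike `|b|`
it is measurable. It is `0` at critical points of `u`, where the quotient is `x / 0`. -/
def requiredDrift (ν : ℝ) (u : En n × ℝ → ℝ) (X : En n × ℝ) : ℝ :=
  (pucciMin ν (spatialHess u X) - Dt u X) / ‖spatialGrad u X‖

/-- The supremum in time of the drift required by `u` on `Q`. -/
def driftEnvelope (ν : ℝ) (u : En n × ℝ → ℝ) (Q : Set (En n × ℝ)) (x : En n) : ℝ≥0∞ :=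
  ⨆ t, ⨆ _ : (x, t) ∈ Q, ENNReal.ofReal (requiredDrift ν u (x, t))

namespace IsSupersolution

theorem pucciMin_le_norm_drift (h : IsSupersolution ν a b u Q) (hν : 0 ≤ ν) (hX : X ∈ Q) :
    pucciMin ν (spatialHess u X) ≤ Dt u X + ‖b X‖ * ‖spatialGrad u X‖ := by
  have hpucci := pucciMin_le hν (h.unifParabolic X hX) (spatialHess u X)
  have hpde := h.supersolution X hX
  rw [Lop_eq_trace_add_inner] at hpde
  linarith [neg_le_of_abs_le (abs_real_inner_le_norm (b X) (spatialGrad u X))]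

theorem requiredDrift_le (h : IsSupersolution ν a b u Q) (hν : 0 ≤ ν) (hX : X ∈ Q) :
    requiredDrift ν u X ≤ ‖b X‖ :=
  div_le_of_le_mul₀ (norm_nonneg _) (norm_nonneg _)
    (sub_le_iff_le_add'.2 (h.pucciMin_le_norm_drift hν hX))

theorem pucciMin_le (h : IsSupersolution ν a b u Q) (hν : 0 ≤ ν) (hX : X ∈ Q) :
    pucciMin ν (spatialHess u X) ≤ Dt u X + requiredDrift ν u X * ‖spatialGrad u X‖ := by
  rcases eq_or_ne ‖spatialGrad u X‖ 0 with hgrad | hgrad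
  · simpa [hgrad] using h.pucciMin_le_norm_drift hν hX
  · rw [requiredDrift, div_mul_cancel₀ _ hgrad, add_sub_cancel]

end IsSupersolution

theorem isOpen_lt_requiredDrift (hν : 0 ≤ ν) (hQ : IsOpen Q) (hu : IsC21 u Q) {c : ℝ}
    (hc : 0 ≤ c) : IsOpen {X ∈ Q | c < requiredDrift ν u X} := by
  set R : Set (En n × ℝ) := Q ∩ spatialGrad u ⁻¹' {0}ᶜ
  have hR : IsOpen R := hu.continuousOn_spatialGrad.isOpen_inter_preimage hQ isOpen_compl_singleton
  have hcont : ContinuousOn (requiredDrift ν u) R := by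
    refine ContinuousOn.div (.sub ?_ ?_) ?_ fun X hX => norm_ne_zero_iff.2 hX.2
    · exact (continuous_pucciMin hν).comp_continuousOn
        (hu.continuousOn_spatialHess.mono inter_subset_left)
    · exact hu.cont_t.mono inter_subset_left
    · exact (hu.continuousOn_spatialGrad.mono inter_subset_left).norm
  convert hcont.isOpen_inter_preimage hR (isOpen_Ioi (a := c)) using 1
  ext X
  refine ⟨fun hX => ⟨⟨hX.1, fun hgrad => hX.2.not_ge ?_⟩, hX.2⟩, fun hX => ⟨hX.1.1, hX.2⟩⟩
  rw [mem_singleton_iff] at hgrad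
  simpa [requiredDrift, hgrad] using hc

theorem isOpen_lt_ofReal_requiredDrift (hν : 0 ≤ ν) (hQ : IsOpen Q) (hu : IsC21 u Q) {c : ℝ≥0∞} :
    IsOpen {X ∈ Q | c < ENNReal.ofReal (requiredDrift ν u X)} := by
  induction c with
  | top => simp
  | coe c =>
    simpa [ENNReal.lt_ofReal_iff_toReal_lt] using isOpen_lt_requiredDrift hν hQ hu c.coe_nonneg

theorem measurable_driftEnvelope (hν : 0 ≤ ν) (hQ : IsOpen Q) (hu : IsC21 u Q) :
    Measurable (driftEnvelope ν u Q) := by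
  refine measurable_of_Ioi fun c => IsOpen.measurableSet ?_
  convert isOpenMap_fst _ (isOpen_lt_ofReal_requiredDrift hν hQ hu (c := c)) using 1
  ext x
  simp [driftEnvelope, lt_iSup_iff]

theorem IsSupersolution.driftEnvelope_le_essSup (h : IsSupersolution ν a b u Q) (hν : 0 ≤ ν)
    (hQ : IsOpen Q) (x : En n) :
    driftEnvelope ν u Q x ≤
      essSup (fun t => (‖b (x, t)‖₊ : ℝ≥0∞)) (volume.restrict {t | (x, t) ∈ Q}) := by
  refine iSup₂_le fun t ht => le_of_forall_lt fun c hc => ?_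
  set E : Set ℝ := {t | (x, t) ∈ Q ∧ c < ENNReal.ofReal (requiredDrift ν u (x, t))}
  have hE : IsOpen E :=
    (isOpen_lt_ofReal_requiredDrift hν hQ h.isC21).preimage (Continuous.prodMk_right x)
  have hslice : MeasurableSet {t | (x, t) ∈ Q} := (hQ.preimage (.prodMk_right x)).measurableSet
  have hpos : volume.restrict {t | (x, t) ∈ Q} E ≠ 0 := by
    rw [Measure.restrict_apply' hslice, inter_eq_left.2 fun s hs => hs.1]
    exact (hE.measure_pos volume ⟨t, ht, hc⟩).ne'
  obtain ⟨s, ⟨hsQ, hcs⟩, hs⟩ := ((frequently_ae_mem_iff.2 hpos).and_eventually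
    (ENNReal.ae_le_essSup fun t => (‖b (x, t)‖₊ : ℝ≥0∞))).exists
  calc c < ENNReal.ofReal (requiredDrift ν u (x, s)) := hcs
    _ ≤ ENNReal.ofReal ‖b (x, s)‖ := ENNReal.ofReal_le_ofReal (h.requiredDrift_le hν hsQ)
    _ = ‖b (x, s)‖₊ := by rw [ofReal_norm, enorm_eq_nnnorm]
    _ ≤ _ := hs

theorem IsSupersolution.lintegral_driftEnvelope_le (h : IsSupersolution ν a b u Q) (hν : 0 ≤ ν)
    (hQ : IsOpen Q) : ∫⁻ x, driftEnvelope ν u Q x ^ n ≤ LxnLtinfPow b Q :=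
  lintegral_mono fun x => by gcongr; exact h.driftEnvelope_le_essSup hν hQ x

end Supersolutions

section Contact

variable {ν ρ c : ℝ} {y : En n} {a : En n × ℝ → Matrix (Fin n) (Fin n) ℝ} {b : En n × ℝ → En n}
  {u : En n × ℝ → ℝ} {Q : Set (En n × ℝ)} {X : En n × ℝ}

theorem IsC21.hasHessianAt_sub_bump (hu : IsC21 u Q) (hQ : IsOpen Q) (hX : X ∈ Q) (ρ c : ℝ)
    (y : En n) :
    HasHessianAt (fun z => u (z, X.2) - c * paraboloid ρ y z ^ 2)
      (fun z => spatialGrad u (z, X.2) - c • -(4 * paraboloid ρ y z) • (z - y))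
      (Matrix.toEuclideanCLM (𝕜 := ℝ) (spatialHess u X - c • bumpHessian ρ y X.1)) X.1 := by
  rw [map_sub, map_smul]
  exact (hu.hasHessianAt hQ hX).sub ((hasHessianAt_paraboloid_sq ρ y X.1).const_mul c)

/-- A bump `c * paraboloid ρ y ^ 2` touches `u (·, X.2)` from below at `X`, while `u` decays in time
at the rate that makes the bump a strict subsolution apart from the drift. -/
structure IsContactPoint (ν ρ c : ℝ) (y : En n) (u : En n × ℝ → ℝ) (X : En n × ℝ) : Prop where
  pos : 0 < c
  paraboloid_pos : 0 < paraboloid ρ y X.1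
  eq : u X = c * paraboloid ρ y X.1 ^ 2
  isLocalMin : IsLocalMin (fun z => u (z, X.2) - c * paraboloid ρ y z ^ 2) X.1
  Dt_le : Dt u X ≤ -(decayRate n ν / ρ ^ 2) * u X

namespace IsContactPoint

theorem posSemidef_sub (hc : IsContactPoint ν ρ c y u X) (hu : IsC21 u Q) (hQ : IsOpen Q)
    (hX : X ∈ Q) : (spatialHess u X - c • bumpHessian ρ y X.1).PosSemidef :=
  Matrix.isPositive_toEuclideanLin_iff.1
    ((hu.hasHessianAt_sub_bump hQ hX ρ c y).isPositive_of_isLocalMin hc.isLocalMin)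

theorem spatialGrad_eq (hc : IsContactPoint ν ρ c y u X) (hu : IsC21 u Q) (hQ : IsOpen Q)
    (hX : X ∈ Q) : spatialGrad u X = c • -(4 * paraboloid ρ y X.1) • (X.1 - y) :=
  sub_eq_zero.1 ((hu.hasHessianAt_sub_bump hQ hX ρ c y).grad_eq_zero_of_isLocalMin hc.isLocalMin)

theorem trace_sub_le (hc : IsContactPoint ν ρ c y u X) (h : IsSupersolution ν a b u Q)
    (hQ : IsOpen Q) (hν : 1 ≤ ν) (hρ : 0 < ρ) (hX : X ∈ Q) :
    (spatialHess u X - c • bumpHessian ρ y X.1).trace ≤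
      ν * (c * (4 * requiredDrift ν u X * paraboloid ρ y X.1 * ‖X.1 - y‖
        - 4 * ν⁻¹ * ‖X.1 - y‖ ^ 2 - paraboloid ρ y X.1 ^ 2 / ρ ^ 2)) := by
  have hν0 : 0 < ν := by positivity
  obtain ⟨A, hA, hAmin⟩ :=
    exists_trace_mul_eq_pucciMin hν0.le ⟨a X, h.unifParabolic X hX⟩ (spatialHess u X)
  refine (trace_le_mul_trace_mul hν0 hA (hc.posSemidef_sub h.isC21 hQ hX)).trans ?_
  gcongr
  have hgrad : ‖spatialGrad u X‖ = 4 * c * paraboloid ρ y X.1 * ‖X.1 - y‖ := by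
    rw [hc.spatialGrad_eq h.isC21 hQ hX, norm_smul, norm_smul, norm_neg, norm_mul,
      Real.norm_of_nonneg hc.pos.le, Real.norm_of_nonneg hc.paraboloid_pos.le]
    norm_num
    ring
  have hpucci := h.pucciMin_le hν0.le hX
  rw [hgrad] at hpucci
  have hbump := mul_le_mul_of_nonneg_left
    (le_trace_mul_bumpHessian hν hρ hA hc.paraboloid_pos.le) hc.pos.le
  have hdecay := hc.Dt_le
  rw [hc.eq] at hdecay
  rw [Matrix.mul_sub, Matrix.trace_sub, Matrix.mul_smul, Matrix.trace_smul, smul_eq_mul, hAmin]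
  linarith

theorem drift_ge (hc : IsContactPoint ν ρ c y u X) (h : IsSupersolution ν a b u Q)
    (hQ : IsOpen Q) (hν : 1 ≤ ν) (hρ : 0 < ρ) (hX : X ∈ Q) :
    4 * ν⁻¹ * ‖X.1 - y‖ ^ 2 + paraboloid ρ y X.1 ^ 2 / ρ ^ 2 ≤
      4 * requiredDrift ν u X * paraboloid ρ y X.1 * ‖X.1 - y‖ := by
  have htrace := (hc.posSemidef_sub h.isC21 hQ hX).trace_nonneg.trans
    (hc.trace_sub_le h hQ hν hρ hX)
  have hbracket := nonneg_of_mul_nonneg_right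
    (nonneg_of_mul_nonneg_right htrace (by positivity)) hc.pos
  linarith

theorem one_le_drift (hc : IsContactPoint ν ρ c y u X) (h : IsSupersolution ν a b u Q)
    (hQ : IsOpen Q) (hν : 1 ≤ ν) (hρ : 0 < ρ) (hX : X ∈ Q) :
    1 ≤ ν * ρ * requiredDrift ν u X := by
  have hd := hc.paraboloid_pos
  have hbalance := hc.drift_ge h hQ hν hρ hX
  set d := paraboloid ρ y X.1
  set s := ‖X.1 - y‖
  have hs : 0 < s := by
    refine (norm_nonneg _).lt_of_ne' fun hs : s = 0 => hbalance.not_gt ?_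
    simp only [hs, mul_zero]
    positivity
  have hinv : ν⁻¹ * (d ^ 2 / ρ ^ 2) ≤ d ^ 2 / ρ ^ 2 :=
    mul_le_of_le_one_left (by positivity) (inv_le_one_of_one_le₀ hν)
  have hsquare : 4 * (d / ρ) * s ≤ 4 * s ^ 2 + d ^ 2 / ρ ^ 2 := by
    rw [← div_pow]
    linarith [sq_nonneg (2 * s - d / ρ)]
  have hle : 4 * (d / ρ) * s ≤ ν * (4 * requiredDrift ν u X * d * s) := by
    calc 4 * (d / ρ) * s ≤ ν * (4 * ν⁻¹ * s ^ 2 + ν⁻¹ * (d ^ 2 / ρ ^ 2)) := by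
          refine hsquare.trans_eq ?_
          field_simp
      _ ≤ ν * (4 * requiredDrift ν u X * d * s) := by gcongr; linarith
  refine le_of_mul_le_mul_left ?_ (by positivity : 0 < 4 * (d / ρ) * s)
  rw [mul_one]
  refine hle.trans_eq ?_
  field_simp

theorem inner_hessian_sub_le (hc : IsContactPoint ν ρ c y u X) (h : IsSupersolution ν a b u Q)
    (hQ : IsOpen Q) (hν : 1 ≤ ν) (hρ : 0 < ρ) (hX : X ∈ Q) (v : En n) :
    ⟪Matrix.toEuclideanCLM (𝕜 := ℝ) (spatialHess u X - c • bumpHessian ρ y X.1) v, v⟫ ≤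
      c * (4 * (ν * ρ * requiredDrift ν u X) * paraboloid ρ y X.1) * ‖v‖ ^ 2 := by
  have hd := hc.paraboloid_pos
  have hc0 := hc.pos
  have hB : 0 < requiredDrift ν u X :=
    pos_of_mul_pos_right (zero_lt_one.trans_le (hc.one_le_drift h hQ hν hρ hX)) (by positivity)
  have htrace : (spatialHess u X - c • bumpHessian ρ y X.1).trace ≤
      c * (4 * (ν * ρ * requiredDrift ν u X) * paraboloid ρ y X.1) :=
    calc _ ≤ _ := hc.trace_sub_le h hQ hν hρ hX
      _ ≤ ν * (c * (4 * requiredDrift ν u X * paraboloid ρ y X.1 * ‖X.1 - y‖)) := by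
          gcongr
          have : 0 ≤ 4 * ν⁻¹ * ‖X.1 - y‖ ^ 2 + paraboloid ρ y X.1 ^ 2 / ρ ^ 2 := by positivity
          linarith
      _ ≤ ν * (c * (4 * requiredDrift ν u X * paraboloid ρ y X.1 * ρ)) := by
          gcongr
          exact ((paraboloid_pos_iff hρ).1 hd).le
      _ = _ := by ring
  have hquad := dotProduct_mulVec_le_trace_mul (hc.posSemidef_sub h.isC21 hQ hX) v.ofLp
  rw [dotProduct_ofLp_self] at hquad
  rw [real_inner_comm, Matrix.inner_toEuclideanCLM]
  exact hquad.trans (by gcongr)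

theorem eventually_le (hc : IsContactPoint ν ρ c y u X) (h : IsSupersolution ν a b u Q)
    (hQ : IsOpen Q) (hν : 1 ≤ ν) (hρ : 0 < ρ) (hX : X ∈ Q) :
    ∀ᶠ z in 𝓝 X.1, u (z, X.2) ≤ c * (paraboloid ρ y z ^ 2 +
      4 * (ν * ρ * requiredDrift ν u X) * paraboloid ρ y X.1 * ‖z - X.1‖ ^ 2) := by
  have hd := hc.paraboloid_pos
  have hc0 := hc.pos
  have hdrift := hc.one_le_drift h hQ hν hρ hX
  have hhess := h.isC21.hasHessianAt_sub_bump hQ hX ρ c y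
  have htouch : u (X.1, X.2) - c * paraboloid ρ y X.1 ^ 2 = 0 := sub_eq_zero.2 hc.eq
  filter_upwards [hhess.eventually_le_of_inner_le (by positivity)
    (hc.inner_hessian_sub_le h hQ hν hρ hX)] with z hz
  rw [htouch, hhess.grad_eq_zero_of_isLocalMin hc.isLocalMin, inner_zero_left] at hz
  linarith

end IsContactPoint

end Contact

section Touching

variable {F T : Type*} [NormedAddCommGroup F] {v : F × T → ℝ} {ρ c c₁ c₂ θ : ℝ} {I : Set T}
  {x y y₁ y₂ z : F} {X X₁ X₂ : F × T}

/-- The bump `c * paraboloid ρ y ^ 2`, constant in time, touches `v` from below at `X` among all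
times in `I`. -/
structure IsTouching (v : F × T → ℝ) (ρ : ℝ) (I : Set T) (y : F) (c : ℝ) (X : F × T) : Prop where
  pos : 0 < c
  paraboloid_pos : 0 < paraboloid ρ y X.1
  snd_mem : X.2 ∈ I
  eq : v X = c * paraboloid ρ y X.1 ^ 2
  le : ∀ Z : F × T, 0 < paraboloid ρ y Z.1 → Z.2 ∈ I → c * paraboloid ρ y Z.1 ^ 2 ≤ v Z

theorem IsTouching.isLocalMin (h : IsTouching v ρ I y c X) :
    IsLocalMin (fun z => v (z, X.2) - c * paraboloid ρ y z ^ 2) X.1 := by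
  have hev : ∀ᶠ z in 𝓝 X.1, 0 < paraboloid ρ y z :=
    continuous_paraboloid.continuousAt.eventually (lt_mem_nhds h.paraboloid_pos)
  filter_upwards [hev] with z hz
  rw [h.eq, sub_self]
  exact sub_nonneg.2 (h.le (z, X.2) hz h.snd_mem)

theorem IsTouching.isMinOn (h : IsTouching v ρ I y c X) : IsMinOn (fun t => v (X.1, t)) I X.2 :=
  fun t ht => h.eq.trans_le (h.le (X.1, t) h.paraboloid_pos ht)

theorem sq_div_lt_paraboloid_sq_div {s ℓ : ℝ} (hρ : 0 < ρ) (hℓ : 0 < ℓ) (hs : 0 < s)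
    (hz : ‖z - y‖ ≤ ρ / 2) (hlow : s < 9 / 16 * ℓ) :
    (ρ ^ 2) ^ 2 / ℓ < paraboloid ρ y z ^ 2 / s := by
  have hz2 : 3 / 4 * ρ ^ 2 ≤ paraboloid ρ y z := by
    have := pow_le_pow_left₀ (norm_nonneg _) hz 2
    rw [paraboloid]
    linarith
  refine (div_lt_div_iff₀ hℓ hs).2 ?_
  calc (ρ ^ 2) ^ 2 * s < (ρ ^ 2) ^ 2 * (9 / 16 * ℓ) := by gcongr
    _ = (3 / 4 * ρ ^ 2) ^ 2 * ℓ := by ring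
    _ ≤ paraboloid ρ y z ^ 2 * ℓ := by gcongr

theorem exists_isTouching [ProperSpace F] {v : F × ℝ → ℝ} {ℓ t₀ t₁ : ℝ} (hρ : 0 < ρ) (hℓ : 0 < ℓ)
    (ht : t₀ ≤ t₁) (hz : ‖z - y‖ ≤ ρ / 2) (hcont : ContinuousOn v (closedBall y ρ ×ˢ Icc t₀ t₁))
    (hpos : ∀ X ∈ closedBall y ρ ×ˢ Icc t₀ t₁, 0 < v X)
    (hini : ∀ x ∈ closedBall y ρ, ℓ ≤ v (x, t₀)) (hlow : v (z, t₁) < 9 / 16 * ℓ) :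
    ∃ c X, X ∈ closedBall y ρ ×ˢ Icc t₀ t₁ ∧ IsTouching v ρ (Ioc t₀ t₁) y c X := by
  have hmem_iff (x : F) : x ∈ closedBall y ρ ↔ ‖x - y‖ ≤ ρ := mem_closedBall_iff_norm
  have hz_mem : (z, t₁) ∈ closedBall y ρ ×ˢ Icc t₀ t₁ :=
    ⟨(hmem_iff z).2 (by linarith), right_mem_Icc.2 ht⟩
  have hratio : ContinuousOn (fun Z => paraboloid ρ y Z.1 ^ 2 / v Z)
      (closedBall y ρ ×ˢ Icc t₀ t₁) :=
    ((continuous_paraboloid.comp continuous_fst).pow 2).continuousOn.div hcont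
      fun Z hZ => (hpos Z hZ).ne'
  obtain ⟨X, hX, hmax⟩ :=
    ((isCompact_closedBall y ρ).prod isCompact_Icc).exists_isMaxOn ⟨_, hz_mem⟩ hratio
  rw [isMaxOn_iff] at hmax
  have hvX := hpos X hX
  have hbeat : (ρ ^ 2) ^ 2 / ℓ < paraboloid ρ y X.1 ^ 2 / v X :=
    (sq_div_lt_paraboloid_sq_div hρ hℓ (hpos _ hz_mem) hz hlow).trans_le (hmax (z, t₁) hz_mem)
  have hnonneg := paraboloid_nonneg ((hmem_iff _).1 hX.1)
  have hparX : 0 < paraboloid ρ y X.1 := by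
    by_contra! hle
    rw [hle.antisymm hnonneg, zero_pow two_ne_zero, zero_div] at hbeat
    exact hbeat.not_ge (by positivity)
  have hsqX : 0 < paraboloid ρ y X.1 ^ 2 := pow_pos hparX 2
  have hinit : t₀ ≠ X.2 := by
    intro hinit
    have hv : ℓ ≤ v X := by simpa only [hinit] using hini X.1 hX.1
    have hpar := paraboloid_le ρ y X.1
    exact hbeat.not_ge (by gcongr)
  refine ⟨v X / paraboloid ρ y X.1 ^ 2, X, hX, div_pos hvX hsqX, hparX,
    ⟨hX.2.1.lt_of_ne hinit, hX.2.2⟩, (div_mul_cancel₀ _ hsqX.ne').symm, fun Z hZ hZI => ?_⟩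
  have hZK : Z ∈ closedBall y ρ ×ˢ Icc t₀ t₁ :=
    ⟨(hmem_iff _).2 ((paraboloid_pos_iff hρ).1 hZ).le, Ioc_subset_Icc_self hZI⟩
  have hle := (div_le_div_iff₀ (hpos Z hZK) hvX).1 (hmax Z hZK)
  rw [div_mul_eq_mul_div, div_le_iff₀ hsqX]
  linarith

theorem norm_le_of_forall_mul_norm_sq_le [NormedSpace ℝ F] {w e : F} {δ M : ℝ} (hM : 1 ≤ M)
    (hw : ‖w‖ < δ / 2)
    (h : ∀ θ ∈ Icc (0 : ℝ) (1 / 2), ‖w + θ • e‖ < δ → θ * ‖e‖ ^ 2 ≤ M * ‖w + θ • e‖ ^ 2) :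
    ‖e‖ ≤ 4 * M * ‖w‖ := by
  by_contra! hlt
  have hw0 := norm_nonneg w
  have he : 0 < ‖e‖ := hlt.trans_le' (by positivity)
  obtain ⟨s, hws, hs⟩ := exists_between (lt_min ((lt_div_iff₀' (by positivity)).2 hlt) hw)
  have hse : 4 * M * s < ‖e‖ := (lt_div_iff₀' (by positivity)).1 (hs.trans_le (min_le_left _ _))
  have hs0 : 0 < s := hw0.trans_lt hws
  have hse' : s / ‖e‖ * ‖e‖ = s := div_mul_cancel₀ s he.ne'
  have hnorm : ‖w + (s / ‖e‖) • e‖ ≤ 2 * s := by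
    refine (norm_add_le _ _).trans ?_
    rw [norm_smul, Real.norm_of_nonneg (by positivity), hse']
    linarith
  have hhalf : s / ‖e‖ ≤ 1 / 2 := by
    rw [div_le_div_iff₀ he two_pos]
    nlinarith
  have hbound := h (s / ‖e‖) ⟨by positivity, hhalf⟩
    (hnorm.trans_lt (by linarith [hs.trans_le (min_le_right _ _)]))
  have hchain : s * ‖e‖ ≤ s * (4 * M * s) :=
    calc s * ‖e‖ = s / ‖e‖ * ‖e‖ ^ 2 := by rw [sq, ← mul_assoc, hse']
      _ ≤ M * (2 * s) ^ 2 := hbound.trans (by gcongr)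
      _ = s * (4 * M * s) := by ring
  exact (le_of_mul_le_mul_left hchain hs0).not_gt hse

variable [InnerProductSpace ℝ F]

theorem paraboloid_mul_add_le (hx₁ : 0 ≤ paraboloid ρ y₁ x) (hx₂ : 0 ≤ paraboloid ρ y₂ x)
    (hθ : θ ∈ Icc (0 : ℝ) 1) :
    paraboloid ρ y₂ x *
        (paraboloid ρ y₁ (x + θ • (y₂ - y₁)) + θ * (1 - θ) * ‖y₂ - y₁‖ ^ 2) ≤
      paraboloid ρ y₂ (x + θ • (y₂ - y₁)) * paraboloid ρ y₁ x := by
  have hline (s : ℝ) : ‖(x - y₁) + s • (y₂ - y₁)‖ ^ 2 =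
      ‖x - y₁‖ ^ 2 + 2 * s * ⟪x - y₁, y₂ - y₁⟫ + s ^ 2 * ‖y₂ - y₁‖ ^ 2 := by
    rw [norm_add_sq_real, inner_smul_right, norm_smul, mul_pow, Real.norm_eq_abs, sq_abs]
    ring
  have hx : x - y₂ = (x - y₁) + (-1 : ℝ) • (y₂ - y₁) := by module
  have hz₁ : x + θ • (y₂ - y₁) - y₁ = (x - y₁) + θ • (y₂ - y₁) := by module
  have hz₂ : x + θ • (y₂ - y₁) - y₂ = (x - y₁) + (θ - 1) • (y₂ - y₁) := by module
  have hgap : 0 ≤ θ * (paraboloid ρ y₂ x - paraboloid ρ y₁ x) ^ 2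
      + θ * (1 - θ) * ‖y₂ - y₁‖ ^ 2 * paraboloid ρ y₁ x
      + 2 * θ ^ 2 * ‖y₂ - y₁‖ ^ 2 * paraboloid ρ y₂ x := by
    have := hθ.1
    have := sub_nonneg.2 hθ.2
    positivity
  refine sub_nonneg.1 (hgap.trans_eq ?_)
  simp only [paraboloid, hz₁, hz₂, hx, hline]
  ring

theorem IsTouching.mul_sq_le_of_isTouching (h₁ : IsTouching v ρ I y₁ c₁ X₁)
    (h₂ : IsTouching v ρ I y₂ c₂ X₂) (hX₂ : 0 < paraboloid ρ y₁ X₂.1) (hθ : θ ∈ Icc (0 : ℝ) 1)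
    (hz : 0 < paraboloid ρ y₁ (X₂.1 + θ • (y₂ - y₁))) :
    c₁ * (paraboloid ρ y₁ (X₂.1 + θ • (y₂ - y₁)) + θ * (1 - θ) * ‖y₂ - y₁‖ ^ 2) ^ 2 ≤
      v (X₂.1 + θ • (y₂ - y₁), X₁.2) := by
  set z := X₂.1 + θ • (y₂ - y₁)
  set g := θ * (1 - θ) * ‖y₂ - y₁‖ ^ 2
  have hg : 0 ≤ g := mul_nonneg (mul_nonneg hθ.1 (sub_nonneg.2 hθ.2)) (by positivity)
  have hd₂ := h₂.paraboloid_pos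
  have hc₂ := h₂.pos
  have hmul : paraboloid ρ y₂ X₂.1 * (paraboloid ρ y₁ z + g) ≤
      paraboloid ρ y₂ z * paraboloid ρ y₁ X₂.1 := paraboloid_mul_add_le hX₂.le hd₂.le hθ
  have hz₂ : 0 < paraboloid ρ y₂ z :=
    pos_of_mul_pos_left ((mul_pos hd₂ (add_pos_of_pos_of_nonneg hz hg)).trans_le hmul) hX₂.le
  have hheights : c₁ * paraboloid ρ y₁ X₂.1 ^ 2 ≤ c₂ * paraboloid ρ y₂ X₂.1 ^ 2 :=
    (h₁.le X₂ hX₂ h₂.snd_mem).trans_eq h₂.eq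
  refine le_trans ?_ (h₂.le (z, X₁.2) hz₂ h₁.snd_mem)
  refine le_of_mul_le_mul_left ?_ (by positivity : 0 < paraboloid ρ y₁ X₂.1 ^ 2)
  calc paraboloid ρ y₁ X₂.1 ^ 2 * (c₁ * (paraboloid ρ y₁ z + g) ^ 2)
      = c₁ * paraboloid ρ y₁ X₂.1 ^ 2 * (paraboloid ρ y₁ z + g) ^ 2 := by ring
    _ ≤ c₂ * paraboloid ρ y₂ X₂.1 ^ 2 * (paraboloid ρ y₁ z + g) ^ 2 := by gcongr
    _ = c₂ * (paraboloid ρ y₂ X₂.1 * (paraboloid ρ y₁ z + g)) ^ 2 := by ring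
    _ ≤ c₂ * (paraboloid ρ y₂ z * paraboloid ρ y₁ X₂.1) ^ 2 := by gcongr
    _ = paraboloid ρ y₁ X₂.1 ^ 2 * (c₂ * paraboloid ρ y₂ z ^ 2) := by ring

theorem IsTouching.eventually_dist_le {M : ℝ} (h₁ : IsTouching v ρ I y₁ c₁ X₁) (hM : 1 ≤ M)
    (hupper : ∀ᶠ z in 𝓝 X₁.1, v (z, X₁.2) ≤
      c₁ * (paraboloid ρ y₁ z ^ 2 + M * paraboloid ρ y₁ X₁.1 * ‖z - X₁.1‖ ^ 2)) :
    ∀ᶠ x₂ in 𝓝 X₁.1, ∀ y₂ c₂ X₂, X₂.1 = x₂ → IsTouching v ρ I y₂ c₂ X₂ →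
      dist y₁ y₂ ≤ 8 * M * dist X₁.1 x₂ := by
  have hd := h₁.paraboloid_pos
  have hnear : ∀ᶠ z in 𝓝 X₁.1, paraboloid ρ y₁ X₁.1 / 2 < paraboloid ρ y₁ z :=
    continuous_paraboloid.continuousAt.eventually (lt_mem_nhds (half_lt_self hd))
  obtain ⟨δ, hδ, hball⟩ := Metric.eventually_nhds_iff_ball.1 (hupper.and hnear)
  filter_upwards [ball_mem_nhds _ (half_pos hδ)] with x₂ hx₂ y₂ c₂ X₂ hX₂ h₂
  subst hX₂
  rw [mem_ball, dist_eq_norm] at hx₂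
  rw [dist_comm y₁, dist_comm X₁.1, dist_eq_norm, dist_eq_norm]
  refine (norm_le_of_forall_mul_norm_sq_le (M := 2 * M) (by linarith) hx₂
    fun θ hθ hz => ?_).trans_eq (by ring)
  rw [sub_add_eq_add_sub] at hz ⊢
  set z := X₂.1 + θ • (y₂ - y₁)
  set g := θ * (1 - θ) * ‖y₂ - y₁‖ ^ 2
  obtain ⟨hzupper, hzpos⟩ := hball z (by rwa [mem_ball, dist_eq_norm])
  have hX₂pos := (hball X₂.1 (by rw [mem_ball, dist_eq_norm]; linarith)).2
  have hlower : c₁ * (paraboloid ρ y₁ z + g) ^ 2 ≤ v (z, X₁.2) :=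
    h₁.mul_sq_le_of_isTouching h₂ ((half_pos hd).trans hX₂pos) ⟨hθ.1, by linarith [hθ.2]⟩
      ((half_pos hd).trans hzpos)
  have hsq := le_of_mul_le_mul_left (hlower.trans hzupper) h₁.pos
  have hθg : θ * ‖y₂ - y₁‖ ^ 2 ≤ 2 * g := by
    have : 0 ≤ θ * ‖y₂ - y₁‖ ^ 2 * (1 - 2 * θ) :=
      mul_nonneg (mul_nonneg hθ.1 (by positivity)) (by linarith [hθ.2])
    linear_combination this
  have hg : 0 ≤ 2 * g := (mul_nonneg hθ.1 (by positivity)).trans hθg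
  have hgM : g ≤ M * ‖z - X₁.1‖ ^ 2 := by
    refine le_of_mul_le_mul_left ?_ hd
    nlinarith [mul_nonneg hg (sub_nonneg.2 hzpos.le), sq_nonneg g]
  linarith

end Touching

section LocalBound

variable {ν ρ c K ℓ t₀ t₁ : ℝ} {y z : En n} {a : En n × ℝ → Matrix (Fin n) (Fin n) ℝ}
  {b : En n × ℝ → En n} {u : En n × ℝ → ℝ} {Q : Set (En n × ℝ)} {X : En n × ℝ}

/-- The function `u` multiplied by `exp (K (t - t₀))`, so that a non-increase of the product in time
means decay of `u` at rate at least `K`. -/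
def expTilt (K t₀ : ℝ) (u : En n × ℝ → ℝ) (X : En n × ℝ) : ℝ := u X * Real.exp (K * (X.2 - t₀))

theorem Dt_le_of_isMinOn_expTilt (hu : DifferentiableAt ℝ (fun t => u (X.1, t)) X.2)
    (hX : t₀ < X.2) (hmin : IsMinOn (fun t => expTilt K t₀ u (X.1, t)) (Ioc t₀ X.2) X.2) :
    Dt u X ≤ -K * u X := by
  have hexp : HasDerivAt (fun t => Real.exp (K * (t - t₀)))
      (Real.exp (K * (X.2 - t₀)) * K) X.2 := by
    simpa using (((hasDerivAt_id X.2).sub_const t₀).const_mul K).exp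
  have hderiv : (Dt u X + K * u X) * Real.exp (K * (X.2 - t₀)) ≤ 0 := by
    refine (Eq.trans_le ?_ (deriv_nonpos_of_isMinOn_Ioc hX hmin))
    refine ((hu.hasDerivAt.mul hexp).deriv.trans ?_).symm
    rw [Dt]
    ring
  linarith [nonpos_of_mul_nonpos_left hderiv (Real.exp_pos _)]

theorem IsTouching.isContactPoint (hu : IsC21 u Q) (hX : X ∈ Q)
    (h : IsTouching (expTilt (decayRate n ν / ρ ^ 2) t₀ u) ρ (Ioc t₀ t₁) y c X) :
    IsContactPoint ν ρ (c * Real.exp (-(decayRate n ν / ρ ^ 2 * (X.2 - t₀)))) y u X where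
  pos := mul_pos h.pos (Real.exp_pos _)
  paraboloid_pos := h.paraboloid_pos
  eq := by
    rw [mul_right_comm, ← h.eq, expTilt, mul_assoc, ← Real.exp_add, add_neg_cancel, Real.exp_zero,
      mul_one]
  isLocalMin := by
    filter_upwards [h.isLocalMin] with z hz
    have hscale := mul_le_mul_of_nonneg_right hz
      (Real.exp_pos (-(decayRate n ν / ρ ^ 2 * (X.2 - t₀)))).le
    simp only [expTilt, sub_mul, mul_assoc, ← Real.exp_add, add_neg_cancel, Real.exp_zero,
      mul_one] at hscale
    linarith
  Dt_le := Dt_le_of_isMinOn_expTilt (hu.diff_t X hX) h.snd_mem.1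
    (h.isMinOn.on_subset (Ioc_subset_Ioc_right h.snd_mem.2))

theorem IsTouching.eventually_dist_le_drift (h : IsSupersolution ν a b u Q) (hQ : IsOpen Q)
    (hν : 1 ≤ ν) (hρ : 0 < ρ) (hX : X ∈ Q)
    (htouch : IsTouching (expTilt (decayRate n ν / ρ ^ 2) t₀ u) ρ (Ioc t₀ t₁) y c X) :
    ∀ᶠ x₂ in 𝓝 X.1, ∀ y₂ c₂ X₂, X₂.1 = x₂ →
      IsTouching (expTilt (decayRate n ν / ρ ^ 2) t₀ u) ρ (Ioc t₀ t₁) y₂ c₂ X₂ →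
      dist y y₂ ≤ 32 * ν * ρ * requiredDrift ν u X * dist X.1 x₂ := by
  have hcontact := htouch.isContactPoint h.isC21 hX
  have hdrift := hcontact.one_le_drift h hQ hν hρ hX
  have hupper : ∀ᶠ z in 𝓝 X.1, expTilt (decayRate n ν / ρ ^ 2) t₀ u (z, X.2) ≤
      c * (paraboloid ρ y z ^ 2 +
        4 * (ν * ρ * requiredDrift ν u X) * paraboloid ρ y X.1 * ‖z - X.1‖ ^ 2) := by
    filter_upwards [hcontact.eventually_le h hQ hν hρ hX] with z hz
    have hscale := mul_le_mul_of_nonneg_right hz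
      (Real.exp_pos (decayRate n ν / ρ ^ 2 * (X.2 - t₀))).le
    rwa [mul_right_comm, mul_assoc c, ← Real.exp_add, neg_add_cancel, Real.exp_zero,
      mul_one] at hscale
  filter_upwards [htouch.eventually_dist_le (by linarith) hupper] with x₂ hx₂ y₂ c₂ X₂ hX₂ h₂
  exact (hx₂ y₂ c₂ X₂ hX₂ h₂).trans_eq (by ring)

theorem IsSupersolution.volume_ball_le (h : IsSupersolution ν a b u Q) (hQ : IsOpen Q)
    (hν : 1 ≤ ν) (hρ : 0 < ρ) (hℓ : 0 < ℓ) (ht : t₀ ≤ t₁)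
    (hsub : closedBall z (2 * ρ) ×ˢ Ioc t₀ t₁ ⊆ Q)
    (hcont : ContinuousOn u (closedBall z (2 * ρ) ×ˢ Icc t₀ t₁))
    (hpos : ∀ X ∈ closedBall z (2 * ρ) ×ˢ Icc t₀ t₁, 0 < u X)
    (hini : ∀ x ∈ closedBall z (2 * ρ), ℓ ≤ u (x, t₀))
    (hlow : expTilt (decayRate n ν / ρ ^ 2) t₀ u (z, t₁) < 9 / 16 * ℓ) :
    volume (ball z (ρ / 2)) ≤ ∫⁻ x in ball z (2 * ρ),
      (2 * (ENNReal.ofReal (32 * ν * ρ) * driftEnvelope ν u Q x)) ^ n := by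
  have hball : ∀ y ∈ ball z (ρ / 2), closedBall y ρ ⊆ ball z (2 * ρ) := fun y hy =>
    closedBall_subset_ball' (by linarith [mem_ball.1 hy])
  have hprod : ∀ y ∈ ball z (ρ / 2),
      closedBall y ρ ×ˢ Icc t₀ t₁ ⊆ closedBall z (2 * ρ) ×ˢ Icc t₀ t₁ := fun y hy =>
    prod_mono_left ((hball y hy).trans ball_subset_closedBall)
  have hexists : ∀ y ∈ ball z (ρ / 2), ∃ c X, X ∈ closedBall y ρ ×ˢ Icc t₀ t₁ ∧
      IsTouching (expTilt (decayRate n ν / ρ ^ 2) t₀ u) ρ (Ioc t₀ t₁) y c X := fun y hy =>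
    exists_isTouching hρ hℓ ht (mem_ball_iff_norm'.1 hy).le
      ((hcont.mono (hprod y hy)).mul (by fun_prop))
      (fun X hX => mul_pos (hpos X (hprod y hy hX)) (Real.exp_pos _))
      (fun x hx => by simpa [expTilt] using hini x (ball_subset_closedBall (hball y hy hx))) hlow
  choose! c X hXmem hX using hexists
  have hXball : MapsTo (fun y => (X y).1) (ball z (ρ / 2)) (ball z (2 * ρ)) := fun y hy =>
    hball y hy (hXmem y hy).1
  have hXQ : ∀ y ∈ ball z (ρ / 2), X y ∈ Q := fun y hy =>
    hsub ⟨ball_subset_closedBall (hXball hy), (hX y hy).snd_mem⟩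
  have hmeas := (measurable_driftEnvelope (by positivity) hQ h.isC21 (ν := ν)).const_mul
    (ENNReal.ofReal (32 * ν * ρ))
  refine (addHaar_le_lintegral_of_dist_le volume hmeas hXball fun y hy =>
    ⟨(32 * ν * ρ * requiredDrift ν u (X y)).toNNReal, ?_, ?_⟩).trans_eq ?_
  · change ENNReal.ofReal _ ≤ _
    rw [ENNReal.ofReal_mul (by positivity)]
    gcongr
    exact le_iSup₂ (f := fun t _ => ENNReal.ofReal (requiredDrift ν u ((X y).1, t)))
      (X y).2 (hXQ y hy)
  · filter_upwards [(hX y hy).eventually_dist_le_drift h hQ hν hρ (hXQ y hy)] with x hx y' hy' hxy'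
    refine (hx y' (c y') (X y') hxy' (hX y' hy')).trans ?_
    gcongr
    exact Real.le_coe_toNNReal _
  · rw [finrank_euclideanSpace_fin]

theorem IsSupersolution.le_expTilt_of_lintegral_lt (h : IsSupersolution ν a b u Q) (hQ : IsOpen Q)
    (hν : 1 ≤ ν) (hρ : 0 < ρ) (hℓ : 0 < ℓ) (ht : t₀ ≤ t₁)
    (hsub : closedBall z (2 * ρ) ×ˢ Ioc t₀ t₁ ⊆ Q)
    (hcont : ContinuousOn u (closedBall z (2 * ρ) ×ˢ Icc t₀ t₁))
    (hpos : ∀ X ∈ closedBall z (2 * ρ) ×ˢ Icc t₀ t₁, 0 < u X)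
    (hini : ∀ x ∈ closedBall z (2 * ρ), ℓ ≤ u (x, t₀))
    (hsmall : ∫⁻ x in ball z (2 * ρ), (ENNReal.ofReal (128 * ν) * driftEnvelope ν u Q x) ^ n <
      volume (ball (0 : En n) 1)) :
    9 / 16 * ℓ ≤ expTilt (decayRate n ν / ρ ^ 2) t₀ u (z, t₁) := by
  by_contra! hlow
  have hvol := h.volume_ball_le hQ hν hρ hℓ ht hsub hcont hpos hini hlow
  have hfactor (x : En n) : (2 * (ENNReal.ofReal (32 * ν * ρ) * driftEnvelope ν u Q x)) ^ n =
      ENNReal.ofReal (ρ / 2) ^ n * (ENNReal.ofReal (128 * ν) * driftEnvelope ν u Q x) ^ n := by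
    rw [← mul_pow, ← mul_assoc, ← mul_assoc, ← ENNReal.ofReal_ofNat 2,
      ← ENNReal.ofReal_mul zero_le_two, ← ENNReal.ofReal_mul (by positivity)]
    congr 3
    ring
  simp only [hfactor] at hvol
  rw [Measure.addHaar_ball_of_pos _ _ (half_pos hρ), finrank_euclideanSpace_fin,
    ENNReal.ofReal_pow (half_pos hρ).le, lintegral_const_mul' _ _ (by finiteness)] at hvol
  have hpow : ENNReal.ofReal (ρ / 2) ^ n ≠ 0 :=
    pow_ne_zero _ (ENNReal.ofReal_pos.2 (half_pos hρ)).ne'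
  exact hsmall.not_ge ((ENNReal.mul_le_mul_iff_right hpow (by finiteness)).1 hvol)

end LocalBound

section MinimumPrinciple

variable {ν m t₀ t₁ : ℝ} {a : En n × ℝ → Matrix (Fin n) (Fin n) ℝ} {b : En n × ℝ → En n}
  {u : En n × ℝ → ℝ} {K : Set (En n)} {Q : Set (En n × ℝ)} {X : En n × ℝ}

namespace IsSupersolution

theorem Dt_nonneg_of_isLocalMin (h : IsSupersolution ν a b u Q) (hQ : IsOpen Q) (hν : 0 < ν)
    (hX : X ∈ Q) (hmin : IsLocalMin (fun x => u (x, X.2)) X.1) : 0 ≤ Dt u X := by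
  have hhess := h.isC21.hasHessianAt hQ hX
  have hgrad : spatialGrad u X = 0 := hhess.grad_eq_zero_of_isLocalMin hmin
  have hpsd : (spatialHess u X).PosSemidef := Matrix.isPositive_toEuclideanLin_iff.1
    ((ContinuousLinearMap.isPositive_toLinearMap_iff _).2 (hhess.isPositive_of_isLocalMin hmin))
  have htrace := hpsd.trace_nonneg.trans (trace_le_mul_trace_mul hν (h.unifParabolic X hX) hpsd)
  have hpde := h.supersolution X hX
  rw [Lop_eq_trace_add_inner, hgrad, inner_zero_right] at hpde
  linarith [nonneg_of_mul_nonneg_right htrace hν]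

theorem le_add_mul_of_le_parabolicBoundary (h : IsSupersolution ν a b u Q) (hQ : IsOpen Q)
    (hν : 0 < ν) (hK : IsCompact K) (hsub : interior K ×ˢ Ioc t₀ t₁ ⊆ Q)
    (hcont : ContinuousOn u (K ×ˢ Icc t₀ t₁)) (hini : ∀ x ∈ K, m ≤ u (x, t₀))
    (hlat : ∀ X ∈ frontier K ×ˢ Ioc t₀ t₁, m ≤ u X) (hX : X ∈ K ×ˢ Icc t₀ t₁) {ε : ℝ}
    (hε : 0 < ε) : m ≤ u X + ε * (X.2 - t₀) := by
  obtain ⟨Z, ⟨hZK, hZt⟩, hmin⟩ := (hK.prod isCompact_Icc).exists_isMinOn ⟨X, hX⟩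
    (f := fun Z => u Z + ε * (Z.2 - t₀)) (hcont.add (by fun_prop))
  refine le_trans ?_ (hmin hX)
  have hadd : 0 ≤ ε * (Z.2 - t₀) := mul_nonneg hε.le (sub_nonneg.2 hZt.1)
  rcases hZt.1.eq_or_lt with hinit | hlater
  · have hmZ : m ≤ u Z := by simpa only [hinit] using hini Z.1 hZK
    exact hmZ.trans (le_add_of_nonneg_right hadd)
  by_cases hint : Z.1 ∈ interior K
  · have hZQ : Z ∈ Q := hsub ⟨hint, hlater, hZt.2⟩
    have hspace : IsLocalMin (fun x => u (x, Z.2)) Z.1 := by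
      filter_upwards [mem_interior_iff_mem_nhds.1 hint] with x hx
      exact (add_le_add_iff_right _).1 (hmin (⟨hx, hZt⟩ : (x, Z.2) ∈ K ×ˢ Icc t₀ t₁))
    have htime : IsMinOn (fun t => u (Z.1, t) + ε * (t - t₀)) (Ioc t₀ Z.2) Z.2 := fun t ht =>
      hmin (⟨hZK, ht.1.le, ht.2.trans hZt.2⟩ : (Z.1, t) ∈ K ×ˢ Icc t₀ t₁)
    have hderiv : deriv (fun t => u (Z.1, t) + ε * (t - t₀)) Z.2 = Dt u Z + ε := by
      have hlin : HasDerivAt (fun t => ε * (t - t₀)) ε Z.2 := by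
        simpa using ((hasDerivAt_id Z.2).sub_const t₀).const_mul ε
      exact ((h.isC21.diff_t Z hZQ).hasDerivAt.add hlin).deriv
    linarith [deriv_nonpos_of_isMinOn_Ioc hlater htime, h.Dt_nonneg_of_isLocalMin hQ hν hZQ hspace]
  · have hfrontier : Z.1 ∈ frontier K := hK.isClosed.frontier_eq ▸ ⟨hZK, hint⟩
    exact (hlat Z ⟨hfrontier, hlater, hZt.2⟩).trans (le_add_of_nonneg_right hadd)

theorem le_of_le_parabolicBoundary (h : IsSupersolution ν a b u Q) (hQ : IsOpen Q) (hν : 0 < ν)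
    (hK : IsCompact K) (hsub : interior K ×ˢ Ioc t₀ t₁ ⊆ Q)
    (hcont : ContinuousOn u (K ×ˢ Icc t₀ t₁)) (hini : ∀ x ∈ K, m ≤ u (x, t₀))
    (hlat : ∀ X ∈ frontier K ×ˢ Ioc t₀ t₁, m ≤ u X) (hX : X ∈ K ×ˢ Icc t₀ t₁) : m ≤ u X := by
  refine le_of_forall_pos_le_add fun δ hδ => ?_
  obtain ⟨ε, hε, hεδ⟩ := exists_pos_mul_lt hδ (X.2 - t₀)
  have := h.le_add_mul_of_le_parabolicBoundary hQ hν hK hsub hcont hini hlat hX hε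
  linarith

end IsSupersolution

end MinimumPrinciple

section Annuli

theorem exists_setLIntegral_lt {α ι : Type*} [MeasurableSpace α] {μ : Measure α} {s : Finset ι}
    {A : ι → Set α} {f : α → ℝ≥0∞} {ε : ℝ≥0∞} (hdisj : (s : Set ι).PairwiseDisjoint A)
    (hA : ∀ i ∈ s, MeasurableSet (A i)) (hf : ∫⁻ x, f x ∂μ < s.card * ε) :
    ∃ i ∈ s, ∫⁻ x in A i, f x ∂μ < ε := by
  by_contra! hlarge
  refine hf.not_ge ?_
  calc s.card * ε ≤ ∑ i ∈ s, ∫⁻ x in A i, f x ∂μ := by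
        simpa using Finset.card_nsmul_le_sum s _ ε hlarge
    _ = ∫⁻ x in ⋃ i ∈ s, A i, f x ∂μ := (lintegral_biUnion_finset hdisj hA f).symm
    _ ≤ ∫⁻ x, f x ∂μ := setLIntegral_le_lintegral _ _

theorem exists_sphere_forall_setLIntegral_lt {E : Type*} [PseudoMetricSpace E] [MeasurableSpace E]
    [OpensMeasurableSpace E] {μ : Measure E} {f : E → ℝ≥0∞} {ε : ℝ≥0∞} {m : ℕ} {q : ℝ} (y : E)
    (r₀ : ℝ) (hq : 0 ≤ q) (hf : ∫⁻ x, f x ∂μ < m * ε) :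
    ∃ R, r₀ + q / 2 ≤ R ∧ R + q / 2 ≤ r₀ + m * q ∧
      ∀ z ∈ sphere y R, ∫⁻ x in ball z (q / 2), f x ∂μ < ε := by
  have hmono : Monotone fun j : ℕ => r₀ + j * q := fun i j hij => by
    dsimp only
    gcongr
  obtain ⟨j, hj, hlt⟩ := exists_setLIntegral_lt (s := Finset.range m)
    (A := fun j : ℕ => (dist · y) ⁻¹' Ioo (r₀ + j * q) (r₀ + (j + 1 : ℕ) * q))
    (fun i _ j _ hij => (hmono.pairwise_disjoint_on_Ioo_succ hij).preimage _)
    (fun j _ => (isOpen_Ioo.preimage (by fun_prop)).measurableSet)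
    (by rwa [Finset.card_range])
  have hjm : ((j + 1 : ℕ) : ℝ) * q ≤ m * q := by
    gcongr
    exact Finset.mem_range.1 hj
  have hj0 : 0 ≤ j * q := by positivity
  push_cast at hlt hjm
  refine ⟨r₀ + (j + 1 / 2) * q, by linarith, by linarith, fun z hz => ?_⟩
  refine (lintegral_mono_set fun x hx => ?_).trans_lt hlt
  rw [mem_sphere] at hz
  rw [mem_ball] at hx
  exact ⟨by linarith [dist_triangle_left z y x], by linarith [dist_triangle x z y]⟩

end Annuli

section Propagation

variable {ν α θ r ℓ t₀ t₁ : ℝ} {m : ℕ} {y : En n} {a : En n × ℝ → Matrix (Fin n) (Fin n) ℝ}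
  {b : En n × ℝ → En n} {u : En n × ℝ → ℝ} {X : En n × ℝ}

/-- The fraction of the initial lower bound that survives in `B_{θr} × (t₀, t₀ + αr²]` when
`B_r \ B_{θr}` is cut into `m` annuli. -/
def propagationConst (n : ℕ) (ν α θ : ℝ) (m : ℕ) : ℝ :=
  9 / 16 * Real.exp (-(decayRate n ν * (8 * m / (1 - θ)) ^ 2 * α))

theorem propagationConst_pos : 0 < propagationConst n ν α θ m := by
  unfold propagationConst
  positivity

theorem propagationConst_le_one (hν : 0 ≤ ν) (hα : 0 ≤ α) : propagationConst n ν α θ m ≤ 1 := by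
  have hexp : Real.exp (-(decayRate n ν * (8 * m / (1 - θ)) ^ 2 * α)) ≤ 1 :=
    Real.exp_le_one_iff.2 (neg_nonpos.2 (by have := decayRate_nonneg (n := n) hν; positivity))
  unfold propagationConst
  linarith

theorem propagationConst_mul_le_of_le_expTilt {t : ℝ} {x : En n} (hν : 0 ≤ ν) (hr : 0 < r)
    (hθ : θ < 1) (hm : m ≠ 0) (hℓ : 0 ≤ ℓ) (ht : t - t₀ ≤ α * r ^ 2)
    (h : 9 / 16 * ℓ ≤ expTilt (decayRate n ν / ((1 - θ) * r / m / 8) ^ 2) t₀ u (x, t)) :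
    propagationConst n ν α θ m * ℓ ≤ u (x, t) := by
  have hθ' : 1 - θ ≠ 0 := (sub_pos.2 hθ).ne'
  have hexponent : decayRate n ν / ((1 - θ) * r / m / 8) ^ 2 * (t - t₀) ≤
      decayRate n ν * (8 * m / (1 - θ)) ^ 2 * α := by
    have := decayRate_nonneg (n := n) hν
    calc _ ≤ decayRate n ν / ((1 - θ) * r / m / 8) ^ 2 * (α * r ^ 2) := by gcongr
      _ = _ := by field_simp
  have hdecay := mul_le_mul_of_nonneg_right h
    (Real.exp_pos (-(decayRate n ν / ((1 - θ) * r / m / 8) ^ 2 * (t - t₀)))).le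
  rw [expTilt, mul_assoc (u _), ← Real.exp_add, add_neg_cancel, Real.exp_zero, mul_one] at hdecay
  refine le_trans ?_ hdecay
  rw [propagationConst, mul_right_comm]
  gcongr

namespace IsSupersolution

theorem exists_sphere_le_expTilt (h : IsSupersolution ν a b u (box y r t₀ t₁)) (hν : 1 ≤ ν)
    (hr : 0 < r) (hℓ : 0 < ℓ) (hθ : θ < 1) (hcont : ContinuousOn u (ball y r ×ˢ Icc t₀ t₁))
    (hpos : ∀ X ∈ box y r t₀ t₁, 0 < u X) (hini : ∀ x ∈ ball y r, ℓ ≤ u (x, t₀))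
    (hdrift : ∫⁻ x, (ENNReal.ofReal (128 * ν) * driftEnvelope ν u (box y r t₀ t₁) x) ^ n <
      m * volume (ball (0 : En n) 1)) :
    ∃ R ∈ Ico (θ * r) r, ∀ z ∈ sphere y R, ∀ t ∈ Ioo t₀ t₁,
      9 / 16 * ℓ ≤ expTilt (decayRate n ν / ((1 - θ) * r / m / 8) ^ 2) t₀ u (z, t) := by
  have hm : (0 : ℝ) < m := Nat.cast_pos.2 <| Nat.pos_of_ne_zero <| by rintro rfl; simp at hdrift
  set q := (1 - θ) * r / m
  have hmq : m * q = (1 - θ) * r := mul_div_cancel₀ _ hm.ne'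
  have hq : 0 < q := div_pos (mul_pos (sub_pos.2 hθ) hr) hm
  obtain ⟨R, hR₀, hR₁, hR⟩ := exists_sphere_forall_setLIntegral_lt y (θ * r) hq.le hdrift
  refine ⟨R, ⟨by linarith, by linarith⟩, fun z hz t ht => ?_⟩
  have hsub : closedBall z (2 * (q / 8)) ⊆ ball y r := by
    refine closedBall_subset_ball' ?_
    rw [mem_sphere.1 hz]
    linarith
  refine h.le_expTilt_of_lintegral_lt (isOpen_ball.prod isOpen_Ioo) hν (by positivity) hℓ ht.1.le
    (prod_mono hsub fun s hs => ⟨hs.1, hs.2.trans_lt ht.2⟩)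
    (hcont.mono (prod_mono hsub (Icc_subset_Icc_right ht.2.le))) (fun X hX => ?_)
    (fun x hx => hini x (hsub hx))
    ((lintegral_mono_set (ball_subset_ball (by linarith))).trans_lt (hR z hz))
  rcases hX.2.1.eq_or_lt with hinit | hlater
  · exact hℓ.trans_le (by simpa only [hinit] using hini X.1 (hsub hX.1))
  · exact hpos X ⟨hsub hX.1, hlater, hX.2.2.trans_lt ht.2⟩

theorem propagationConst_mul_le_of_mem_Ioo (h : IsSupersolution ν a b u (box y r t₀ t₁))
    (hν : 1 ≤ ν) (hα : 0 ≤ α) (hr : 0 < r) (hℓ : 0 < ℓ) (hθ : θ < 1) (ht : t₁ - t₀ ≤ α * r ^ 2)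
    (hcont : ContinuousOn u (ball y r ×ˢ Icc t₀ t₁)) (hpos : ∀ X ∈ box y r t₀ t₁, 0 < u X)
    (hini : ∀ x ∈ ball y r, ℓ ≤ u (x, t₀))
    (hdrift : ∫⁻ x, (ENNReal.ofReal (128 * ν) * driftEnvelope ν u (box y r t₀ t₁) x) ^ n <
      m * volume (ball (0 : En n) 1)) (hX : X ∈ ball y (θ * r) ×ˢ Ioo t₀ t₁) :
    propagationConst n ν α θ m * ℓ ≤ u X := by
  have hν0 : 0 < ν := by positivity
  have hm : m ≠ 0 := by rintro rfl; simp at hdrift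
  obtain ⟨R, ⟨hθR, hRr⟩, hR⟩ := h.exists_sphere_le_expTilt hν hr hℓ hθ hcont hpos hini hdrift
  have hsub : closedBall y R ⊆ ball y r := closedBall_subset_ball hRr
  refine h.le_of_le_parabolicBoundary (t₀ := t₀) (t₁ := X.2) (isOpen_ball.prod isOpen_Ioo) hν0
    (isCompact_closedBall y R)
    (prod_mono (interior_subset.trans hsub) fun t ht => ⟨ht.1, ht.2.trans_lt hX.2.2⟩)
    (hcont.mono (prod_mono hsub (Icc_subset_Icc_right hX.2.2.le))) (fun x hx => ?_)
    (fun Z hZ => ?_)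
    ⟨ball_subset_closedBall (ball_subset_ball hθR hX.1), hX.2.1.le, le_rfl⟩
  · exact (mul_le_of_le_one_left hℓ.le (propagationConst_le_one hν0.le hα)).trans (hini x (hsub hx))
  · have hZt : Z.2 ∈ Ioo t₀ t₁ := ⟨hZ.2.1, hZ.2.2.trans_lt hX.2.2⟩
    exact propagationConst_mul_le_of_le_expTilt hν0.le hr hθ hm hℓ.le (by linarith [hZt.2])
      (hR Z.1 (frontier_closedBall_subset_sphere hZ.1) Z.2 hZt)

theorem propagationConst_mul_le (h : IsSupersolution ν a b u (box y r t₀ t₁))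
    (hν : 1 ≤ ν) (hα : 0 ≤ α) (hr : 0 < r) (hℓ : 0 < ℓ) (hθ : θ < 1) (ht : t₁ - t₀ ≤ α * r ^ 2)
    (hcont : ContinuousOn u (ball y r ×ˢ Icc t₀ t₁)) (hpos : ∀ X ∈ box y r t₀ t₁, 0 < u X)
    (hini : ∀ x ∈ ball y r, ℓ ≤ u (x, t₀))
    (hdrift : ∫⁻ x, (ENNReal.ofReal (128 * ν) * driftEnvelope ν u (box y r t₀ t₁) x) ^ n <
      m * volume (ball (0 : En n) 1)) (hX : X ∈ ball y (θ * r) ×ˢ Icc t₀ t₁) :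
    propagationConst n ν α θ m * ℓ ≤ u X := by
  have hXr : X.1 ∈ ball y r := ball_subset_ball (mul_le_of_le_one_left hr.le hθ.le) hX.1
  rcases hX.2.1.eq_or_lt with hinit | hlater
  · have hℓX : ℓ ≤ u X := by simpa only [hinit] using hini X.1 hXr
    exact (mul_le_of_le_one_left hℓ.le (propagationConst_le_one (by positivity) hα)).trans hℓX
  · have hclosure : X.2 ∈ closure (Ioo t₀ t₁) := by
      rw [closure_Ioo (hlater.trans_le hX.2.2).ne]
      exact hX.2
    have hclosed : IsClosed
        (Icc t₀ t₁ ∩ (fun t => u (X.1, t)) ⁻¹' Ici (propagationConst n ν α θ m * ℓ)) :=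
      (hcont.comp (Continuous.prodMk_right X.1).continuousOn fun t ht => ⟨hXr, ht⟩)
        |>.preimage_isClosed_of_isClosed isClosed_Icc isClosed_Ici
    have hsub : Ioo t₀ t₁ ⊆
        Icc t₀ t₁ ∩ (fun t => u (X.1, t)) ⁻¹' Ici (propagationConst n ν α θ m * ℓ) :=
      fun s hs => ⟨Ioo_subset_Icc_self hs, h.propagationConst_mul_le_of_mem_Ioo hν hα hr hℓ hθ ht
        hcont hpos hini hdrift (X := (X.1, s)) ⟨hX.1, hs⟩⟩
    exact (closure_minimal hsub hclosed hclosure).2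

end IsSupersolution

theorem exists_lintegral_driftEnvelope_lt (n : ℕ) (hν : 0 ≤ ν) {S : ℝ≥0∞} (hS : S ≠ ∞) :
    ∃ m : ℕ, ∀ (a : En n × ℝ → Matrix (Fin n) (Fin n) ℝ) (b : En n × ℝ → En n) (u : En n × ℝ → ℝ)
      (Q : Set (En n × ℝ)), IsOpen Q → IsSupersolution ν a b u Q → LxnLtinfPow b Q ≤ S →
      ∫⁻ x, (ENNReal.ofReal (128 * ν) * driftEnvelope ν u Q x) ^ n <
        m * volume (ball (0 : En n) 1) := by
  have hball : volume (ball (0 : En n) 1) ≠ 0 := (measure_ball_pos _ _ one_pos).ne'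
  obtain ⟨m, hm⟩ := ENNReal.exists_nat_mul_gt hball
    (by finiteness : ENNReal.ofReal (128 * ν) ^ n * S ≠ ∞)
  refine ⟨m, fun a b u Q hQ h hb => hm.trans_le' ?_⟩
  simp only [mul_pow]
  rw [lintegral_const_mul' _ _ (by finiteness)]
  gcongr
  exact (h.lintegral_driftEnvelope_le hν hQ).trans hb

theorem prod_Icc_subset_closure_box (y : En n) (r : ℝ) (ht : t₀ ≠ t₁) :
    ball y r ×ˢ Icc t₀ t₁ ⊆ closure (box y r t₀ t₁) := by
  rw [box, closure_prod_eq, closure_Ioo ht]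
  exact prod_mono_left subset_closure

end Propagation

theorem propagation_of_lower_bounds_general (n : ℕ) {ν α θ : ℝ} {S : ℝ≥0∞} (hν : 1 ≤ ν)
    (hα : 0 ≤ α) (hθ : θ < 1) (hS : S ≠ ∞) :
    ∃ C : ℝ, 0 < C ∧ ∀ (r ℓ t₀ t₁ : ℝ) (u : En n × ℝ → ℝ)
      (a : En n × ℝ → Matrix (Fin n) (Fin n) ℝ) (b : En n × ℝ → En n) (y : En n),
      0 < r → 0 < ℓ → t₁ - t₀ ≤ α * r ^ 2 →
      ContinuousOn u (ball y r ×ˢ Icc t₀ t₁) →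
      IsSupersolution ν a b u (box y r t₀ t₁) →
      LxnLtinfPow b (box y r t₀ t₁) ≤ S →
      (∀ X ∈ box y r t₀ t₁, 0 < u X) →
      (∀ x ∈ ball y r, ℓ ≤ u (x, t₀)) →
      ∀ X ∈ ball y (θ * r) ×ˢ Icc t₀ t₁, C * ℓ ≤ u X := by
  obtain ⟨m, hm⟩ := exists_lintegral_driftEnvelope_lt n (by positivity : 0 ≤ ν) hS
  refine ⟨propagationConst n ν α θ m, propagationConst_pos, ?_⟩
  intro r ℓ t₀ t₁ u a b y hr hℓ ht hcont h hb hpos hini X hX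
  exact h.propagationConst_mul_le hν hα hr hℓ hθ ht hcont hpos hini
    (hm a b u _ (isOpen_ball.prod isOpen_Ioo) h hb) hX

/-- **Propagation of lower bounds without smallness of the drift** (Lemma 3.2). -/
theorem propagation_of_lower_bounds
    (n : ℕ) (hn : 0 < n) (ν S α : ℝ) (hν : 1 ≤ ν) (hα : 0 < α) :
    ∃ C : ℝ, 0 < C ∧
      ∀ (r ℓ : ℝ) (u : En n × ℝ → ℝ)
        (a : En n × ℝ → Matrix (Fin n) (Fin n) ℝ) (b : En n × ℝ → En n)
        (O : Set (En n × ℝ)),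
        0 < r → 0 < ℓ →
        IsOpen O →
        closure (box (0 : En n) r (-(r ^ 2)) ((α - 1) * r ^ 2)) ⊆ O →
        IsC21 u O →
        UnifParabolic ν a (box (0 : En n) r (-(r ^ 2)) ((α - 1) * r ^ 2)) →
        LxnLtinfPow b (box (0 : En n) r (-(r ^ 2)) ((α - 1) * r ^ 2)) ≤
          ENNReal.ofReal S →
        (∀ X ∈ box (0 : En n) r (-(r ^ 2)) ((α - 1) * r ^ 2),
          -Dt u X + Lop a b u X ≤ 0) →
        (∀ X ∈ box (0 : En n) r (-(r ^ 2)) ((α - 1) * r ^ 2), 0 < u X) →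
        (∀ x ∈ ball (0 : En n) r, ℓ ≤ u (x, -(r ^ 2))) →
        (∀ x ∈ ball (0 : En n) (r / 2), C * ℓ ≤ u (x, (α - 1) * r ^ 2)) ∧
          C * ℓ ≤ u ((0 : En n), (α - 1) * r ^ 2) := by
  obtain ⟨C, hC, hlower⟩ := propagation_of_lower_bounds_general n hν hα.le one_half_lt_one
    (ENNReal.ofReal_ne_top (r := S))
  refine ⟨C, hC, fun r ℓ u a b O hr hℓ _ hO hu ha hb hpde hpos hini => ?_⟩
  have ht : -r ^ 2 < (α - 1) * r ^ 2 := by nlinarith [sq_pos_of_pos hr]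
  have hcont : ContinuousOn u (ball 0 r ×ˢ Icc (-r ^ 2) ((α - 1) * r ^ 2)) :=
    hu.cont.mono ((prod_Icc_subset_closure_box 0 r ht.ne).trans hO)
  have hfinal : ∀ x ∈ ball (0 : En n) (r / 2), C * ℓ ≤ u (x, (α - 1) * r ^ 2) := fun x hx =>
    hlower r ℓ _ _ u a b 0 hr hℓ (by linarith) hcont ⟨hu.mono (subset_closure.trans hO), ha, hpde⟩
      hb hpos hini _ ⟨by rwa [one_div_mul_eq_div], right_mem_Icc.2 ht.le⟩
  exact ⟨hfinal, hfinal 0 (mem_ball_self (half_pos hr))⟩
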